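/- Let Γ = ℤ^5 ⋊ ℤ/4 where the generator of ℤ/4 acts on ℤ^5 by the matrix [[-1,0,0,0,0],[0,1,0,0,0],[0,0,1,1,0],[0,0,-1,0,-1],[0,0,-1,0,0]]. Then H^1(Γ,ℤ) ≅ ℤ^2; H^2(Γ,ℤ) ≅ ℤ^2 ⊕ ℤ/4 ⊕ ℤ/2; H^3(Γ,ℤ) ≅ ℤ^2 ⊕ (ℤ/4)^2 ⊕ (ℤ/2)^2; H^4(Γ,ℤ) ≅ ℤ ⊕ (ℤ/4)^2 ⊕ (ℤ/2)^4; and H^i(Γ,ℤ) ≅ (ℤ/4)^2 ⊕ (ℤ/2)^6 for all i ≥ 5. -/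

import Mathlib

open Matrix

namespace Crystal

/-- The lattice `ℤ^n`, written multiplicatively so that it can be a factor of a semidirect
product of groups. -/
abbrev Lat (n : ℕ) : Type := Multiplicative (Fin n → ℤ)

/-- The invertible integer matrix determined by `M` with `M ^ (m + 1) = 1`. -/
def matUnit {n : ℕ} (M : Matrix (Fin n) (Fin n) ℤ) (m : ℕ) (hm : M ^ (m + 1) = 1) :
    (Matrix (Fin n) (Fin n) ℤ)ˣ :=
  ⟨M, M ^ m, by rw [← pow_succ']; exact hm, by rw [← pow_succ]; exact hm⟩

/-- Linear automorphisms of `ℤ^n` as multiplicative automorphisms of the multiplicative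
version of `ℤ^n`. -/
def linToAut (n : ℕ) : ((Fin n → ℤ) ≃ₗ[ℤ] (Fin n → ℤ)) →* MulAut (Lat n) :=
  MonoidHom.mk' (fun e => AddEquiv.toMultiplicative e.toAddEquiv) (fun _ _ => rfl)

/-- An invertible integer matrix acts on the (multiplicative) lattice `ℤ^n` by (left)
matrix-vector multiplication. -/
def glToAut (n : ℕ) : (Matrix (Fin n) (Fin n) ℤ)ˣ →* MulAut (Lat n) :=
  (linToAut n).comp
    ((LinearMap.GeneralLinearGroup.generalLinearEquiv ℤ (Fin n → ℤ)).toMonoidHom.comp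
      (Matrix.GeneralLinearGroup.toLin).toMonoidHom)

/-- The homomorphism from `ℤ/m` (written multiplicatively) to a group `G` sending the
generator `1` to a chosen element `α` satisfying `α ^ m = 1`. -/
def zmodHom {G : Type*} [Group G] (m : ℕ) [NeZero m] (α : G) (hα : α ^ m = 1) :
    Multiplicative (ZMod m) →* G :=
  MonoidHom.mk' (fun g => α ^ (g.toAdd.val)) (by
    intro a b
    show α ^ (ZMod.val (a.toAdd + b.toAdd)) = α ^ (ZMod.val a.toAdd) * α ^ (ZMod.val b.toAdd)
    rw [ZMod.val_add, ← pow_eq_pow_mod _ hα, pow_add])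

/-- The action of `ℤ/q` on the lattice `ℤ^n` in which the generator `1` of `ℤ/q` acts by left
multiplication by the integer matrix `M`; `M` is required to satisfy `M ^ q = 1`. -/
def matAction {n : ℕ} (q : ℕ) [NeZero q] (M : Matrix (Fin n) (Fin n) ℤ)
    (hq : M ^ q = 1) : Multiplicative (ZMod q) →* MulAut (Lat n) :=
  zmodHom q (glToAut n (matUnit M (q - 1) (by
      rwa [Nat.sub_add_cancel (Nat.one_le_iff_ne_zero.2 (NeZero.ne q))])))
    (by
      rw [← map_pow]
      convert map_one (glToAut n)
      ext i j
      rw [Units.val_pow_eq_pow_val]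
      simp [matUnit, hq])

/-- The crystallographic group `ℤ^n ⋊ ℤ/q` in which the generator `1` of `ℤ/q` acts on the
lattice `ℤ^n` by left multiplication by the integer matrix `M` (with `M ^ q = 1`). -/
abbrev Crys {n : ℕ} (q : ℕ) [NeZero q] (M : Matrix (Fin n) (Fin n) ℤ) (hq : M ^ q = 1) : Type :=
  SemidirectProduct (Lat n) (Multiplicative (ZMod q)) (matAction q M hq)


open CategoryTheory groupCohomology

variable {k : Type} [CommRing k]

lemma comp_contractNth {G H : Type*} [Monoid G] [Monoid H] (f : G →* H) {n : ℕ}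
    (j : Fin (n + 1)) (g : Fin (n + 1) → G) (i : Fin n) :
    f (Fin.contractNth j (· * ·) g i) = Fin.contractNth j (· * ·) (fun l => f (g l)) i := by
  rcases lt_trichotomy (i : ℕ) j with h | h | h
  · rw [Fin.contractNth_apply_of_lt _ _ _ _ h, Fin.contractNth_apply_of_lt _ _ _ _ h]
  · rw [Fin.contractNth_apply_of_eq _ _ _ _ h, Fin.contractNth_apply_of_eq _ _ _ _ h,
      _root_.map_mul]
  · rw [Fin.contractNth_apply_of_gt _ _ _ _ h, Fin.contractNth_apply_of_gt _ _ _ _ h]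

/-- The map of inhomogeneous cochain complexes induced (contravariantly in the group,
covariantly in the coefficients) by a group homomorphism `f : H →* G` together with a
compatible linear map `τ : A → B` of coefficients. -/
def cochainsMap {G H : Type} [Group G] [Group H] (A : Rep k G) (B : Rep k H)
    (f : H →* G) (τ : A →ₗ[k] B)
    (hcomp : ∀ (h : H) (a : A), τ (A.ρ (f h) a) = B.ρ h (τ a)) :
    inhomogeneousCochains A ⟶ inhomogeneousCochains B where
  f n := ModuleCat.ofHom
    { toFun := fun F v => τ (F (fun i => f (v i)))
      map_add' := fun x y => by funext v; simp
      map_smul' := fun r x => by funext v; simp }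
  comm' i j hij := by
    have hij' : i + 1 = j := hij
    subst hij'
    ext F v
    rw [inhomogeneousCochains.d_def, inhomogeneousCochains.d_def]
    show (inhomogeneousCochains.d B i) (fun w => τ (F (fun l => f (w l)))) v
      = τ ((inhomogeneousCochains.d A i) F (fun l => f (v l)))
    simp only [inhomogeneousCochains.d_hom_apply, map_add, map_sum, _root_.map_smul]
    congr 1
    · exact (hcomp (v 0) _).symm
    · refine Finset.sum_congr rfl fun j' _ => ?_
      have hc : (fun l => f (j'.contractNth (· * ·) v l))
          = j'.contractNth (· * ·) (fun l => f (v l)) := by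
        funext l
        exact comp_contractNth f j' v l
      rw [hc]

lemma cochainsMap_eq_id {G : Type} [Group G] (A : Rep k G) (f : G →* G) (τ : A →ₗ[k] A)
    (hcomp : ∀ (h : G) (a : A), τ (A.ρ (f h) a) = A.ρ h (τ a))
    (hf : ∀ x, f x = x) (hτ : ∀ a, τ a = a) :
    cochainsMap A A f τ hcomp = 𝟙 _ := by
  apply HomologicalComplex.Hom.ext
  funext n
  ext F v
  show τ (F (fun i => f (v i))) = F v
  simp only [hf, hτ]

lemma cochainsMap_comp {G H K : Type} [Group G] [Group H] [Group K]
    (A : Rep k G) (B : Rep k H) (C : Rep k K)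
    (f₁ : H →* G) (τ₁ : A →ₗ[k] B) (h₁ : ∀ (h : H) (a : A), τ₁ (A.ρ (f₁ h) a) = B.ρ h (τ₁ a))
    (f₂ : K →* H) (τ₂ : B →ₗ[k] C) (h₂ : ∀ (h : K) (a : B), τ₂ (B.ρ (f₂ h) a) = C.ρ h (τ₂ a))
    (f₃ : K →* G) (τ₃ : A →ₗ[k] C) (h₃ : ∀ (h : K) (a : A), τ₃ (A.ρ (f₃ h) a) = C.ρ h (τ₃ a))
    (hf : ∀ x, f₁ (f₂ x) = f₃ x) (hτ : ∀ a, τ₂ (τ₁ a) = τ₃ a) :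
    cochainsMap A B f₁ τ₁ h₁ ≫ cochainsMap B C f₂ τ₂ h₂ = cochainsMap A C f₃ τ₃ h₃ := by
  apply HomologicalComplex.Hom.ext
  funext n
  ext F v
  show τ₂ (τ₁ (F (fun i => f₁ (f₂ (v i))))) = τ₃ (F (fun i => f₃ (v i)))
  simp only [hf]
  exact hτ _

/-- Given an action `φ` of a group `G` on a group `L` and a representation `ψ` of `G` on a
`k`-module `V`, this is `H^j(L, V)` (with `L` acting trivially on the coefficients `V`),
endowed with the `G`-action functorially induced by the action of `G` on `L` and on `V`:
`g` acts via the conjugation automorphism `φ g⁻¹` of `L` and via `ψ g` on `V`. -/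
noncomputable def cohRep {G L V : Type} [Group G] [Group L] [AddCommGroup V] [Module k V]
    (φ : G →* MulAut L) (ψ : Representation k G V) (j : ℕ) : Rep k G :=
  Rep.of (X := groupCohomology (Rep.trivial k L V) j)
    { toFun := fun g => ModuleCat.Hom.hom (HomologicalComplex.homologyMap
        (cochainsMap (Rep.trivial k L V) (Rep.trivial k L V) (φ g⁻¹).toMonoidHom (ψ g)
          (fun _ _ => rfl)) j)
      map_one' := by
        have h := cochainsMap_eq_id (Rep.trivial k L V) (φ 1⁻¹).toMonoidHom (ψ 1)
          (fun _ _ => rfl) (fun x => by simp) (fun a => by simp)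
        exact congrArg ModuleCat.Hom.hom
          ((congrArg (fun c => HomologicalComplex.homologyMap c j) h).trans
            (HomologicalComplex.homologyMap_id _ j))
      map_mul' := fun g₁ g₂ => by
        have h := cochainsMap_comp (Rep.trivial k L V) (Rep.trivial k L V) (Rep.trivial k L V)
          (φ g₂⁻¹).toMonoidHom (ψ g₂) (fun _ _ => rfl)
          (φ g₁⁻¹).toMonoidHom (ψ g₁) (fun _ _ => rfl)
          (φ (g₁ * g₂)⁻¹).toMonoidHom (ψ (g₁ * g₂)) (fun _ _ => rfl)
          (fun x => by simp [_root_.mul_inv_rev]) (fun a => by simp)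
        rw [← h, HomologicalComplex.homologyMap_comp]
        rfl }


/-- `H^i(G, H^j(L, ℤ))`: the `i`-th cohomology of the cyclic group `ℤ/q` with coefficients in
the `j`-th cohomology of the lattice `ℤ^n` (with trivial `ℤ` coefficients), where the
`ℤ/q`-action on `H^j(ℤ^n, ℤ)` is the one functorially induced by the matrix action on the
lattice. -/
noncomputable abbrev cohOfCoh {n : ℕ} (q : ℕ) [NeZero q] (M : Matrix (Fin n) (Fin n) ℤ)
    (hq : M ^ q = 1) (i j : ℕ) : ModuleCat ℤ :=
  groupCohomology
    (cohRep (matAction q M hq) (1 : Representation ℤ (Multiplicative (ZMod q)) ℤ) j) i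

/-- `H^k(Γ, ℤ)` for `Γ = ℤ^n ⋊ ℤ/q`, with trivial coefficients `ℤ`. -/
noncomputable abbrev cohCrys {n : ℕ} (q : ℕ) [NeZero q] (M : Matrix (Fin n) (Fin n) ℤ)
    (hq : M ^ q = 1) (k : ℕ) : ModuleCat ℤ :=
  groupCohomology (Rep.trivial ℤ (Crys q M hq) ℤ) k

end Crystal

/-- The holonomy matrix. -/
def holM : Matrix (Fin 5) (Fin 5) ℤ := !![-1, 0, 0, 0, 0; 0, 1, 0, 0, 0; 0, 0, 1, 1, 0; 0, 0, -1, 0, -1; 0, 0, -1, 0, 0]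

lemma holM_pow : holM ^ 4 = 1 := by decide

/-- `H^k(ℤ^5 ⋊ ℤ/4, ℤ)`, where the generator of `ℤ/4` acts on `ℤ^5` by left
multiplication by the matrix `holM`. -/
noncomputable abbrev H (k : ℕ) : ModuleCat ℤ := Crystal.cohCrys 4 holM holM_pow k

/-- `H^i(ℤ/4, H^j(ℤ^5, ℤ))`, with the functorially induced action on coefficients. -/
noncomputable abbrev Hc (i j : ℕ) : ModuleCat ℤ := Crystal.cohOfCoh 4 holM holM_pow i j

namespace AcyRes
open CategoryTheory

variable {k G : Type} [CommRing k] [Group G]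

lemma shortExact_mk {A B C : Rep.{0} k G} (f : A ⟶ B) (g : B ⟶ C) (w : f ≫ g = 0)
    (hf : Function.Injective f.hom) (hg : Function.Surjective g.hom)
    (hex : ∀ b, g.hom b = 0 → ∃ a, f.hom a = b) : (ShortComplex.mk f g w).ShortExact where
  exact := by
    rw [← ShortComplex.exact_map_iff_of_faithful _
      (CategoryTheory.forget₂ (Rep.{0} k G) (ModuleCat.{0} k))]
    rw [ShortComplex.moduleCat_exact_iff]
    intro x hx
    exact hex x hx
  mono_f := (Rep.mono_iff_injective _).2 hf
  epi_g := (Rep.epi_iff_surjective _).2 hg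

/-- kernel representation -/
def kerSub {I J : Rep.{0} k G} (d : I ⟶ J) : Submodule k I := LinearMap.ker d.hom.toLinearMap

lemma hom_comm {I J : Rep.{0} k G} (d : I ⟶ J) (g : G) (x : I) :
    d.hom (I.ρ g x) = J.ρ g (d.hom x) := LinearMap.congr_fun (d.hom.isIntertwining' g) x

lemma mem_kerSub {I J : Rep.{0} k G} (d : I ⟶ J) (x : I) : x ∈ kerSub d ↔ d.hom x = 0 := Iff.rfl

def kerRho {I J : Rep.{0} k G} (d : I ⟶ J) : Representation k G (kerSub d) where
  toFun g := (I.ρ g).restrict fun x hx => by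
    rw [mem_kerSub] at hx ⊢
    rw [hom_comm, hx, map_zero]
  map_one' := by ext x; simp
  map_mul' a b := by ext x; simp

def kerRep {I J : Rep.{0} k G} (d : I ⟶ J) : Rep.{0} k G := Rep.of (kerRho d)

def kerIncl {I J : Rep.{0} k G} (d : I ⟶ J) : kerRep d ⟶ I :=
  Rep.ofHom (σ := I.ρ) { (kerSub d).subtype with isIntertwining' := fun g => by ext x; rfl }

def kerLift {A I J : Rep.{0} k G} (d : I ⟶ J) (f : A ⟶ I) (h : ∀ a, d.hom (f.hom a) = 0) :
    A ⟶ kerRep d :=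
  Rep.ofHom (ρ := A.ρ) (σ := kerRho d)
    { (f.hom.toLinearMap.codRestrict (kerSub d) h) with
      isIntertwining' := fun g => by
        ext x
        exact hom_comm f g x }

noncomputable def equivOfKer {M T N : Type} [AddCommGroup M] [AddCommGroup T] [AddCommGroup N]
    (α : M →+ T) (β : M →+ N) (hα : Function.Surjective α) (hβ : Function.Surjective β)
    (h : ∀ x, α x = 0 ↔ β x = 0) : T ≃+ N :=
  (QuotientAddGroup.quotientKerEquivOfSurjective α hα).symm.trans
    ((QuotientAddGroup.quotientAddEquivOfEq (by ext x; exact h x)).trans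
      (QuotientAddGroup.quotientKerEquivOfSurjective β hβ))

theorem acyc_zero {A I C : Rep.{0} k G} (f : A ⟶ I) (g : I ⟶ C) (w : f ≫ g = 0)
    (hX : (ShortComplex.mk f g w).ShortExact)
    (hac : Limits.IsZero (groupCohomology I 1))
    {T : Type} [AddCommGroup T] (ψ : C →+ T)
    (hs : ∀ t, ∃ x, (∀ γ, C.ρ γ x = x) ∧ ψ x = t)
    (hk : ∀ x, (∀ γ, C.ρ γ x = x) → (ψ x = 0 ↔ ∃ y, (∀ γ, I.ρ γ y = y) ∧ g.hom y = x)) :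
    Nonempty (groupCohomology A 1 ≃+ T) := by
  have hepi := groupCohomology.epi_δ_of_isZero hX 0 hac
  have hsurj := (ModuleCat.epi_iff_surjective _).1 hepi
  have hexact := groupCohomology.mapShortComplex₃_exact hX (i := 0) (j := 1) rfl
  rw [ShortComplex.moduleCat_exact_iff] at hexact
  let δ : groupCohomology C 0 →+ groupCohomology A 1 :=
    (groupCohomology.δ hX 0 1 rfl).hom.toAddMonoidHom
  let val : groupCohomology C 0 →+ C :=
    (C.ρ.invariants.subtype.comp (groupCohomology.H0Iso C).hom.hom).toAddMonoidHom
  have hval : ∀ z γ, C.ρ γ (val z) = val z := fun z γ =>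
    ((groupCohomology.H0Iso C).hom.hom z).2 γ
  have hnat : ∀ y : groupCohomology I 0,
      val (groupCohomology.map (MonoidHom.id G) g 0 y) =
        g.hom ((groupCohomology.H0Iso I).hom.hom y).1 := by
    intro y
    have := congrArg (fun q => q.hom y) (groupCohomology.map_id_comp_H0Iso_hom g)
    exact congrArg Subtype.val this
  have hvalinj : Function.Injective val := by
    intro a b hab
    have h1 : (groupCohomology.H0Iso C).hom.hom a = (groupCohomology.H0Iso C).hom.hom b :=
      Subtype.ext hab
    have h2 := congrArg (groupCohomology.H0Iso C).inv.hom h1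
    have h3 : ∀ a, (groupCohomology.H0Iso C).inv.hom ((groupCohomology.H0Iso C).hom.hom a) = a :=
      fun a => congrArg (fun q => q.hom a) (groupCohomology.H0Iso C).hom_inv_id
    rwa [h3, h3] at h2
  have hvalsurj : ∀ x, (∀ γ, C.ρ γ x = x) → ∃ z, val z = x := by
    intro x hx
    refine ⟨(groupCohomology.H0Iso C).inv.hom ⟨x, hx⟩, ?_⟩
    have h3 : (groupCohomology.H0Iso C).hom.hom ((groupCohomology.H0Iso C).inv.hom ⟨x, hx⟩) = ⟨x, hx⟩ :=
      congrArg (fun q => q.hom (⟨x, hx⟩ : C.ρ.invariants)) (groupCohomology.H0Iso C).inv_hom_id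
    exact congrArg Subtype.val h3
  refine ⟨equivOfKer δ (ψ.comp val) hsurj ?_ ?_⟩
  · intro t
    obtain ⟨x, hx, rfl⟩ := hs t
    obtain ⟨z, rfl⟩ := hvalsurj x hx
    exact ⟨z, rfl⟩
  · intro z
    show _ ↔ ψ (val z) = 0
    rw [hk _ (hval z)]
    constructor
    · intro hz
      obtain ⟨y, hy⟩ := hexact z hz
      have hy' : groupCohomology.map (MonoidHom.id G) g 0 y = z := hy
      refine ⟨_, ((groupCohomology.H0Iso I).hom.hom y).2, ?_⟩
      exact (hnat y).symm.trans (congrArg val hy')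
    · rintro ⟨y, hy, hyz⟩
      have h3 : (groupCohomology.H0Iso I).hom.hom ((groupCohomology.H0Iso I).inv.hom ⟨y, hy⟩) = ⟨y, hy⟩ :=
        congrArg (fun q => q.hom (⟨y, hy⟩ : I.ρ.invariants)) (groupCohomology.H0Iso I).inv_hom_id
      have h4 : groupCohomology.map (MonoidHom.id G) g 0 ((groupCohomology.H0Iso I).inv.hom ⟨y, hy⟩) = z := by
        apply hvalinj
        rw [hnat, h3]
        exact hyz
      rw [← h4]
      have := (groupCohomology.mapShortComplex₃ hX (i := 0) (j := 1) rfl).zero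
      exact congrArg (fun q => q.hom ((groupCohomology.H0Iso I).inv.hom ⟨y, hy⟩)) this

theorem acyc (n : ℕ) : ∀ (A : Rep.{0} k G) (I : ℕ → Rep.{0} k G) (d : ∀ n, I n ⟶ I (n + 1))
    (f : A ⟶ I 0) (_ : Function.Injective f.hom)
    (_ : ∀ x, (d 0).hom x = 0 ↔ ∃ a, f.hom a = x)
    (_ : ∀ n x, (d (n + 1)).hom x = 0 ↔ ∃ y, (d n).hom y = x)
    (_ : ∀ n m, Limits.IsZero (groupCohomology (I n) (m + 1)))
    {T : Type} [AddCommGroup T] (ψ : I (n + 1) →+ T)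
    (_ : ∀ t, ∃ x, (∀ γ, (I (n + 1)).ρ γ x = x) ∧ (d (n + 1)).hom x = 0 ∧ ψ x = t)
    (_ : ∀ x, (∀ γ, (I (n + 1)).ρ γ x = x) → (d (n + 1)).hom x = 0 →
      (ψ x = 0 ↔ ∃ y, (∀ γ, (I n).ρ γ y = y) ∧ (d n).hom y = x)),
    Nonempty (groupCohomology A (n + 1) ≃+ T) := by
  induction n with
  | zero =>
    intro A I d f hf h0 hex hac T _ ψ hs hk
    have hd : ∀ x, (d 1).hom ((d 0).hom x) = 0 := fun x => (hex 0 _).2 ⟨x, rfl⟩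
    let g := kerLift (d 1) (d 0) hd
    have w : f ≫ g = 0 := by
      refine Rep.hom_ext (Representation.IntertwiningMap.ext (LinearMap.ext fun x => Subtype.ext ?_))
      exact (h0 _).2 ⟨x, rfl⟩
    have hX := shortExact_mk f g w hf (by
        rintro ⟨x, hx⟩
        obtain ⟨y, rfl⟩ := (hex 0 x).1 hx
        exact ⟨y, rfl⟩) (fun b hb => (h0 b).1 (congrArg Subtype.val hb))
    refine acyc_zero f g w hX (hac 0 0) (ψ.comp (kerSub (d 1)).subtype.toAddMonoidHom) ?_ ?_
    · intro t
      obtain ⟨x, hx, hdx, hψ⟩ := hs t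
      exact ⟨⟨x, hdx⟩, fun γ => Subtype.ext (hx γ), hψ⟩
    · rintro ⟨x, hx⟩ hinv
      have := hk x (fun γ => congrArg Subtype.val (hinv γ)) hx
      refine this.trans ?_
      constructor
      · rintro ⟨y, hy, rfl⟩
        exact ⟨y, hy, rfl⟩
      · rintro ⟨y, hy, hyx⟩
        exact ⟨y, hy, congrArg Subtype.val hyx⟩
  | succ n ih =>
    intro A I d f hf h0 hex hac T _ ψ hs hk
    have hd : ∀ x, (d 1).hom ((d 0).hom x) = 0 := fun x => (hex 0 _).2 ⟨x, rfl⟩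
    let g := kerLift (d 1) (d 0) hd
    have w : f ≫ g = 0 := by
      refine Rep.hom_ext (Representation.IntertwiningMap.ext (LinearMap.ext fun x => Subtype.ext ?_))
      exact (h0 _).2 ⟨x, rfl⟩
    have hX := shortExact_mk f g w hf (by
        rintro ⟨x, hx⟩
        obtain ⟨y, rfl⟩ := (hex 0 x).1 hx
        exact ⟨y, rfl⟩) (fun b hb => (h0 b).1 (congrArg Subtype.val hb))
    have hiso := groupCohomology.isIso_δ_of_isZero hX (n + 1) (hac 0 n) (hac 0 (n + 1))
    obtain ⟨e⟩ := ih (kerRep (d 1)) (fun n => I (n + 1)) (fun n => d (n + 1)) (kerIncl (d 1))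
      (Subtype.val_injective) (fun x => ⟨fun hx => ⟨⟨x, hx⟩, rfl⟩, by rintro ⟨a, rfl⟩; exact a.2⟩)
      (fun n => hex (n + 1)) (fun n m => hac (n + 1) m) ψ hs hk
    exact ⟨(asIso (groupCohomology.δ hX (n + 1) (n + 1 + 1) rfl)).toLinearEquiv.toAddEquiv.symm.trans e⟩

/-- Retracts of acyclics. -/
theorem isZero_of_retract {A B : Rep.{0} k G} (i : A ⟶ B) (p : B ⟶ A) (h : i ≫ p = 𝟙 A) (n : ℕ)
    (hB : Limits.IsZero (groupCohomology B n)) : Limits.IsZero (groupCohomology A n) := by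
  have h1 : (groupCohomology.functor k G n).map i ≫ (groupCohomology.functor k G n).map p = 𝟙 _ := by
    rw [← CategoryTheory.Functor.map_comp, h, CategoryTheory.Functor.map_id]
  have h2 : (groupCohomology.functor k G n).map i = 0 := hB.eq_of_tgt _ _
  rw [h2, Limits.zero_comp] at h1
  exact (Limits.IsZero.iff_id_eq_zero _).2 h1.symm

theorem isZero_coind (W : Rep.{0} k (⊥ : Subgroup G)) (n : ℕ) :
    Limits.IsZero (groupCohomology (Rep.coind (⊥ : Subgroup G).subtype W) (n + 1)) :=
  (isZero_groupCohomology_succ_of_subsingleton W n).of_iso (groupCohomology.coindIso W (n + 1))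

end AcyRes

namespace CubeRes

abbrev Y := Fin 5 → ℤ

/-- number of odd coordinates -/
def oddc (y : Y) : ℕ := ∑ i, if y i % 2 = 1 then 1 else 0

/-- sign -/
def sg (a : ℤ) : ℤ := if a % 2 = 1 then -1 else 1

def sgn (i : Fin 5) (y : Y) : ℤ := ∏ j ∈ Finset.univ.filter (· < i), sg (y j)

abbrev e (i : Fin 5) : Y := Pi.single i 1

section A
variable {A : Type} [AddCommGroup A]

def dl (i : Fin 5) (F : Y → A) : Y → A := fun y =>
  if y i % 2 = 1 then sgn i y • (F (y + e i) - F (y - e i)) else 0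

def del (F : Y → A) : Y → A := fun y => ∑ i, dl i F y

lemma oddc_add (y : Y) (i : Fin 5) (h : y i % 2 = 1) : oddc (y + e i) + 1 = oddc y := by
  unfold oddc
  rw [← Finset.add_sum_erase _ _ (Finset.mem_univ i), ← Finset.add_sum_erase Finset.univ
    (fun j => if y j % 2 = 1 then 1 else 0) (Finset.mem_univ i)]
  have : ∀ j ∈ Finset.univ.erase i, (if (y + e i) j % 2 = 1 then 1 else 0) = 
      (if y j % 2 = 1 then 1 else 0) := by
    intro j hj
    rw [Finset.mem_erase] at hj
    simp [e, Pi.single_eq_of_ne hj.1]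
  rw [Finset.sum_congr rfl this]
  have h1 : ¬ (y i + 1) % 2 = 1 := by omega
  simp only [Pi.add_apply, e, Pi.single_eq_same, if_neg h1, if_pos h]
  omega

lemma oddc_sub (y : Y) (i : Fin 5) (h : y i % 2 = 1) : oddc (y - e i) + 1 = oddc y := by
  unfold oddc
  rw [← Finset.add_sum_erase _ _ (Finset.mem_univ i), ← Finset.add_sum_erase Finset.univ
    (fun j => if y j % 2 = 1 then 1 else 0) (Finset.mem_univ i)]
  have : ∀ j ∈ Finset.univ.erase i, (if (y - e i) j % 2 = 1 then 1 else 0) = 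
      (if y j % 2 = 1 then 1 else 0) := by
    intro j hj
    rw [Finset.mem_erase] at hj
    simp [e, Pi.single_eq_of_ne hj.1]
  rw [Finset.sum_congr rfl this]
  have h1 : ¬ (y i - 1) % 2 = 1 := by omega
  simp only [Pi.sub_apply, e, Pi.single_eq_same, if_neg h1, if_pos h]
  omega

lemma sg_add_one (a : ℤ) : sg (a + 1) = - sg a := by unfold sg; split_ifs <;> omega
lemma sg_sub_one (a : ℤ) : sg (a - 1) = - sg a := by unfold sg; split_ifs <;> omega

lemma sgn_add_lt (i j : Fin 5) (h : j < i) (y : Y) : sgn i (y + e j) = - sgn i y := by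
  unfold sgn
  have hm : j ∈ Finset.univ.filter (· < i) := by simpa using h
  rw [← Finset.mul_prod_erase _ _ hm, ← Finset.mul_prod_erase _ (fun l => sg (y l)) hm]
  rw [Finset.prod_congr rfl (g := fun l => sg (y l))]
  · simp [e, sg_add_one]
  · intro l hl
    simp only [Finset.mem_erase] at hl
    simp [e, Pi.single_eq_of_ne hl.1]

lemma sgn_sub_lt (i j : Fin 5) (h : j < i) (y : Y) : sgn i (y - e j) = - sgn i y := by
  have := sgn_add_lt i j h (y - e j)
  rw [sub_add_cancel] at this
  omega

lemma sgn_add_ge (i j : Fin 5) (h : ¬ j < i) (y : Y) : sgn i (y + e j) = sgn i y := by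
  unfold sgn
  refine Finset.prod_congr rfl fun l hl => ?_
  have hl' : l < i := by simpa using hl
  have : l ≠ j := by rintro rfl; exact h hl'
  simp [e, Pi.single_eq_of_ne this]

lemma sgn_sub_ge (i j : Fin 5) (h : ¬ j < i) (y : Y) : sgn i (y - e j) = sgn i y := by
  have := sgn_add_ge i j h (y - e j)
  rw [sub_add_cancel] at this
  omega

lemma dl_add (i) (F F' : Y → A) : dl i (F + F') = dl i F + dl i F' := by
  funext y; simp only [dl, Pi.add_apply]; split_ifs
  · rw [← smul_add]; congr 1; abel
  · simp

lemma dl_neg (i) (F : Y → A) : dl i (-F) = - dl i F := by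
  funext y; simp only [dl, Pi.neg_apply]; split_ifs
  · rw [← smul_neg]; congr 1; abel
  · simp

lemma dl_zsmul (i) (c : ℤ) (F : Y → A) : dl i (c • F) = c • dl i F := by
  funext y; simp only [dl, Pi.smul_apply]; split_ifs
  · rw [← smul_sub, smul_comm]
  · simp

lemma del_add (F F' : Y → A) : del (F + F') = del F + del F' := by
  funext y; simp only [del, dl_add, Pi.add_apply, Finset.sum_add_distrib]
lemma del_neg (F : Y → A) : del (-F) = - del F := by
  funext y; simp only [del, dl_neg, Pi.neg_apply, Finset.sum_neg_distrib]
lemma del_sub (F F' : Y → A) : del (F - F') = del F - del F' := by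
  rw [sub_eq_add_neg, del_add, del_neg, sub_eq_add_neg]
lemma del_zsmul (c : ℤ) (F : Y → A) : del (c • F) = c • del F := by
  funext y; simp only [del, dl_zsmul, Pi.smul_apply, Finset.smul_sum]

lemma dl_sum {ι : Type} (s : Finset ι) (i) (F : ι → Y → A) : dl i (∑ a ∈ s, F a) = ∑ a ∈ s, dl i (F a) := by
  classical
  induction s using Finset.induction_on with
  | empty => funext y; simp [dl]
  | insert a s ha ih => rw [Finset.sum_insert ha, dl_add, ih, Finset.sum_insert ha]

/-- locality -/
lemma dl_congr (i) (F F' : Y → A) (y : Y) (h : ∀ z, oddc z + 1 = oddc y → F z = F' z) :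
    dl i F y = dl i F' y := by
  unfold dl
  split_ifs with hi
  · rw [h _ (oddc_add y i hi), h _ (oddc_sub y i hi)]
  · rfl

lemma del_congr (F F' : Y → A) (y : Y) (h : ∀ z, oddc z + 1 = oddc y → F z = F' z) :
    del F y = del F' y := Finset.sum_congr rfl fun i _ => dl_congr i F F' y h

lemma del_zero : del (0 : Y → A) = 0 := by funext y; simp [del, dl]

lemma del_eq_zero (F : Y → A) (y : Y) (h : ∀ z, oddc z + 1 = oddc y → F z = 0) : del F y = 0 := by
  rw [del_congr F 0 y h, del_zero]; rfl

lemma e_comm (y : Y) (i j : Fin 5) : y + e i + e j = y + e j + e i := by abel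

lemma dl_anti_lt (i j : Fin 5) (hij : i < j) (F : Y → A) (y : Y) :
    dl i (dl j F) y = - dl j (dl i F) y := by
  have hne : i ≠ j := hij.ne
  have hji : ¬ j < i := not_lt.2 hij.le
  unfold dl
  simp only [Pi.add_apply, Pi.sub_apply, e, Pi.single_eq_of_ne hne, Pi.single_eq_of_ne hne.symm,
    add_zero, sub_zero]
  by_cases h1 : y i % 2 = 1 <;> by_cases h2 : y j % 2 = 1 <;> simp only [h1, h2, if_true, if_false,
    sub_self, smul_zero, neg_zero]
  have h3 := sgn_add_lt j i hij y
  have h4 := sgn_sub_lt j i hij y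
  have h5 := sgn_add_ge i j hji y
  have h6 := sgn_sub_ge i j hji y
  simp only [e] at h3 h4 h5 h6
  rw [h3, h4, h5, h6]
  have e1 : y + Pi.single i 1 + Pi.single j 1 = y + Pi.single j 1 + Pi.single i 1 := by abel
  have e2 : y + Pi.single i 1 - Pi.single j 1 = y - Pi.single j 1 + Pi.single i 1 := by abel
  have e3 : y - Pi.single i 1 + Pi.single j 1 = y + Pi.single j 1 - Pi.single i 1 := by abel
  have e4 : y - Pi.single i 1 - Pi.single j 1 = y - Pi.single j 1 - Pi.single i 1 := by abel
  rw [e1, e2, e3, e4]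
  module

lemma dl_self (i : Fin 5) (F : Y → A) (y : Y) : dl i (dl i F) y = 0 := by
  unfold dl
  by_cases h : y i % 2 = 1
  · have h1 : ¬ (y + e i) i % 2 = 1 := by simp [e]; omega
    have h2 : ¬ (y - e i) i % 2 = 1 := by simp [e]; omega
    rw [if_pos h, if_neg h1, if_neg h2]; simp
  · rw [if_neg h]

lemma dl_anti (i j : Fin 5) (F : Y → A) (y : Y) :
    dl i (dl j F) y = - dl j (dl i F) y := by
  rcases lt_trichotomy i j with h | h | h
  · exact dl_anti_lt i j h F y
  · subst h
    rw [dl_self, neg_zero]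
  · rw [dl_anti_lt j i h F y, neg_neg]

lemma del_del (F : Y → A) : del (del F) = 0 := by
  funext y
  have h0 : del F = ∑ j, dl j F := by funext z; simp [del]
  have : del (del F) y = ∑ i, ∑ j, dl i (dl j F) y := by
    rw [h0]
    simp only [del, dl_sum, Finset.sum_apply]
  rw [this]
  have s01 := dl_anti 0 1 F y
  have s02 := dl_anti 0 2 F y
  have s03 := dl_anti 0 3 F y
  have s04 := dl_anti 0 4 F y
  have s12 := dl_anti 1 2 F y
  have s13 := dl_anti 1 3 F y
  have s14 := dl_anti 1 4 F y
  have s23 := dl_anti 2 3 F y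
  have s24 := dl_anti 2 4 F y
  have s34 := dl_anti 3 4 F y
  simp only [Fin.sum_univ_five, dl_self, s01, s02, s03, s04, s12, s13, s14, s23, s24, s34,
    Pi.zero_apply]
  abel

/-- discrete antiderivative -/
def tel (a : ℤ → A) : ℤ → A
  | Int.ofNat n => ∑ i ∈ Finset.range n, a i
  | Int.negSucc n => - ∑ i ∈ Finset.range (n + 1), a (-(i : ℤ) - 1)

lemma tel_succ (a : ℤ → A) (t : ℤ) : tel a (t + 1) - tel a t = a t := by
  match t with
  | Int.ofNat n =>
    show (∑ i ∈ Finset.range (n + 1), a i) - (∑ i ∈ Finset.range n, a i) = a n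
    rw [Finset.sum_range_succ]; abel
  | Int.negSucc 0 =>
    show (∑ i ∈ Finset.range 0, a i) - (- ∑ i ∈ Finset.range (0 + 1), a (-(i : ℤ) - 1)) = a (-1)
    simp
  | Int.negSucc (n + 1) =>
    show (- ∑ i ∈ Finset.range (n + 1), a (-(i : ℤ) - 1)) -
      (- ∑ i ∈ Finset.range (n + 1 + 1), a (-(i : ℤ) - 1)) = a (Int.negSucc (n + 1))
    rw [Finset.sum_range_succ _ (n + 1)]
    have : (Int.negSucc (n + 1)) = -((n + 1 : ℕ) : ℤ) - 1 := by omega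
    rw [this]; abel

lemma tel_zero (a : ℤ → A) (h : ∀ t, a t = 0) (t : ℤ) : tel a t = 0 := by
  cases t <;> simp [tel, h]

def Gm (m : Fin 5) (F : Y → A) : Y → A := fun y =>
  if y m % 2 = 1 then 0 else tel (fun t => F (Function.update y m (2 * t + 1))) (y m / 2)

lemma oddc_update (y : Y) (m : Fin 5) (h : ¬ y m % 2 = 1) (t : ℤ) :
    oddc (Function.update y m (2 * t + 1)) = oddc y + 1 := by
  unfold oddc
  rw [← Finset.add_sum_erase _ _ (Finset.mem_univ m), ← Finset.add_sum_erase Finset.univ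
    (fun j => if y j % 2 = 1 then 1 else 0) (Finset.mem_univ m)]
  have : ∀ j ∈ Finset.univ.erase m, (if Function.update y m (2 * t + 1) j % 2 = 1 then 1 else 0) = 
      (if y j % 2 = 1 then 1 else 0) := by
    intro j hj
    rw [Finset.mem_erase] at hj
    simp [Function.update_of_ne hj.1]
  rw [Finset.sum_congr rfl this]
  have h1 : (2 * t + 1) % 2 = 1 := by omega
  simp only [Function.update_self, if_neg h, if_pos h1]
  omega

lemma Gm_supp (m : Fin 5) (j : ℕ) (F : Y → A) (hF : ∀ y, oddc y ≠ j + 1 → F y = 0) (y : Y) (h : oddc y ≠ j) :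
    Gm m F y = 0 := by
  unfold Gm
  split_ifs with h1
  · rfl
  · apply tel_zero
    intro t
    apply hF
    rw [oddc_update y m h1]; omega

lemma Gm_vanish (m : Fin 5) (F : Y → A) (hF : ∀ y, (∃ i < m, y i % 2 = 1) → F y = 0) (y : Y)
    (h : ∃ i < m, y i % 2 = 1) : Gm m F y = 0 := by
  unfold Gm
  split_ifs with h1
  · rfl
  · apply tel_zero
    intro t
    apply hF
    obtain ⟨i, hi, h⟩ := h
    exact ⟨i, hi, by rw [Function.update_of_ne hi.ne]; exact h⟩

lemma sgn_one (m : Fin 5) (y : Y) (h : ¬ ∃ i < m, y i % 2 = 1) : sgn m y = 1 := by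
  unfold sgn
  apply Finset.prod_eq_one
  intro i hi
  have : i < m := by simpa using hi
  unfold sg
  rw [if_neg]
  exact fun h' => h ⟨i, this, h'⟩

lemma sgn_ne (m : Fin 5) (y : Y) : sgn m y * sgn m y = 1 := by
  unfold sgn
  rw [← Finset.prod_mul_distrib]
  apply Finset.prod_eq_one
  intro i _
  unfold sg
  split_ifs <;> rfl

lemma step (m : Fin 5) (F : Y → A) (hd : del F = 0) (hF : ∀ y, (∃ i < m, y i % 2 = 1) → F y = 0)
    (y : Y) (h : ∃ i ≤ m, y i % 2 = 1) : del (Gm m F) y = F y := by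
  by_cases hlt : ∃ i < m, y i % 2 = 1
  · rw [hF y hlt]
    apply Finset.sum_eq_zero
    intro i' _
    -- all terms vanish
    unfold dl
    split_ifs with hi'
    swap
    · rfl
    by_cases hex : ∃ i < m, i ≠ i' ∧ y i % 2 = 1
    · obtain ⟨i, him, hne, hodd⟩ := hex
      rw [Gm_vanish m F hF _ ⟨i, him, by simpa [e, Pi.single_eq_of_ne hne] using hodd⟩,
        Gm_vanish m F hF _ ⟨i, him, by simpa [e, Pi.single_eq_of_ne hne] using hodd⟩]
      simp
    · push Not at hex
      obtain ⟨i, him, hodd⟩ := hlt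
      have hii : i = i' := by
        by_contra hne
        exact hex i him hne hodd
      subst hii
      have hne : m ≠ i := him.ne'
      have hG : Gm m F (y + e i) = Gm m F (y - e i) := by
        unfold Gm
        simp only [Pi.add_apply, Pi.sub_apply, e, Pi.single_eq_of_ne hne, add_zero, sub_zero]
        split_ifs with hym
        · rfl
        · congr 1
          funext t
          have e1 : Function.update (y + Pi.single i 1) m (2 * t + 1) =
              Function.update y m (2 * t + 1) + e i := by
            funext l
            by_cases hl : l = m
            · subst hl; simp [e, Pi.single_eq_of_ne hne]
            · simp [Function.update_of_ne hl]
          have e2 : Function.update (y - Pi.single i 1) m (2 * t + 1) =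
              Function.update y m (2 * t + 1) - e i := by
            funext l
            by_cases hl : l = m
            · subst hl; simp [e, Pi.single_eq_of_ne hne]
            · simp [Function.update_of_ne hl]
          rw [e1, e2]
          have hz := congrFun hd (Function.update y m (2 * t + 1))
          set z := Function.update y m (2 * t + 1) with hzdef
          have hzi : z i % 2 = 1 := by rw [hzdef, Function.update_of_ne hne.symm]; exact hodd
          have : del F z = dl i F z := by
            apply Finset.sum_eq_single i
            · intro l _ hl
              unfold dl
              split_ifs
              · rw [hF _ ⟨i, him, by simpa [e, Pi.single_eq_of_ne hl.symm] using hzi⟩,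
                  hF _ ⟨i, him, by simpa [e, Pi.single_eq_of_ne hl.symm] using hzi⟩]
                simp
              · rfl
            · simp
          rw [this] at hz
          unfold dl at hz
          rw [if_pos hzi] at hz
          have h2 := congrArg (fun q => sgn i z • q) hz
          simp only [smul_smul, sgn_ne, one_smul, Pi.zero_apply, smul_zero] at h2
          exact sub_eq_zero.1 h2
      rw [hG]; simp
  · have hm : y m % 2 = 1 := by
      obtain ⟨i, him, hi⟩ := h
      rcases him.lt_or_eq with h' | h'
      · exact absurd ⟨i, h', hi⟩ hlt
      · rwa [h'] at hi
    have : del (Gm m F) y = dl m (Gm m F) y := by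
      apply Finset.sum_eq_single m
      · intro l _ hl
        unfold dl
        split_ifs
        · have h1 : (y + e l) m % 2 = 1 := by simpa [e, Pi.single_eq_of_ne hl.symm] using hm
          have h2 : (y - e l) m % 2 = 1 := by simpa [e, Pi.single_eq_of_ne hl.symm] using hm
          unfold Gm
          rw [if_pos h1, if_pos h2]; simp
        · rfl
      · simp
    rw [this]
    unfold dl
    rw [if_pos hm, sgn_one m y hlt, one_smul]
    have h1 : ¬ (y + e m) m % 2 = 1 := by simp [e]; omega
    have h2 : ¬ (y - e m) m % 2 = 1 := by simp [e]; omega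
    unfold Gm
    rw [if_neg h1, if_neg h2]
    have u1 : ∀ t, Function.update (y + e m) m t = Function.update y m t := by
      intro t; funext l
      by_cases hl : l = m
      · subst hl; simp
      · simp [Function.update_of_ne hl, e, Pi.single_eq_of_ne hl]
    have u2 : ∀ t, Function.update (y - e m) m t = Function.update y m t := by
      intro t; funext l
      by_cases hl : l = m
      · subst hl; simp
      · simp [Function.update_of_ne hl, e, Pi.single_eq_of_ne hl]
    simp only [u1, u2]
    have d1 : (y + e m) m / 2 = (y m / 2) + 1 := by simp [e]; omega
    have d2 : (y - e m) m / 2 = y m / 2 := by simp [e]; omega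
    rw [d1, d2, tel_succ]
    congr 1
    funext l
    by_cases hl : l = m
    · subst hl; simp; omega
    · simp [Function.update_of_ne hl]

lemma del_supp (j : ℕ) (G : Y → A) (hG : ∀ y, oddc y ≠ j → G y = 0) (y : Y) (h : oddc y ≠ j + 1) :
    del G y = 0 := del_eq_zero G y fun z hz => hG z (by omega)

lemma exact_aux (j : ℕ) (m : ℕ) (hm : m ≤ 5) (F : Y → A) (hF : ∀ y, oddc y ≠ j + 1 → F y = 0)
    (hd : del F = 0) : ∃ G : Y → A, (∀ y, oddc y ≠ j → G y = 0) ∧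
      ∀ y, (∃ i : Fin 5, (i : ℕ) < m ∧ y i % 2 = 1) → (F - del G) y = 0 := by
  induction m with
  | zero => exact ⟨0, fun _ _ => rfl, by rintro y ⟨i, h, _⟩; omega⟩
  | succ m ih =>
    obtain ⟨G, hG, hFG⟩ := ih (by omega)
    let m' : Fin 5 := ⟨m, by omega⟩
    have hF' : ∀ y, oddc y ≠ j + 1 → (F - del G) y = 0 := by
      intro y hy
      rw [Pi.sub_apply, hF y hy, del_supp j G hG y hy, sub_zero]
    have hd' : del (F - del G) = 0 := by rw [del_sub, hd, del_del, sub_zero]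
    refine ⟨G + Gm m' (F - del G), ?_, ?_⟩
    · intro y hy
      rw [Pi.add_apply, hG y hy, Gm_supp m' j _ hF' y hy, add_zero]
    · rintro y ⟨i, him, hi⟩
      have := step m' (F - del G) hd' (fun y ⟨i, hi, h⟩ => hFG y ⟨i, hi, h⟩) y
        ⟨i, Fin.mk_le_mk.2 (Nat.lt_succ_iff.1 him) , hi⟩
      rw [del_add, Pi.sub_apply, Pi.add_apply, this, Pi.sub_apply]
      abel

lemma del_exact (j : ℕ) (F : Y → A) (hF : ∀ y, oddc y ≠ j + 1 → F y = 0)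
    (hd : del F = 0) : ∃ G : Y → A, (∀ y, oddc y ≠ j → G y = 0) ∧ del G = F := by
  obtain ⟨G, hG, hFG⟩ := exact_aux j 5 le_rfl F hF hd
  refine ⟨G, hG, ?_⟩
  funext y
  by_cases hy : oddc y = j + 1
  · have : ∃ i : Fin 5, y i % 2 = 1 := by
      by_contra hcon
      push Not at hcon
      have : oddc y = 0 := Finset.sum_eq_zero fun i _ => if_neg (hcon i)
      omega
    obtain ⟨i, hi⟩ := this
    exact (sub_eq_zero.1 (hFG y ⟨i, i.2, hi⟩)).symm
  · rw [hF y hy, del_supp j G hG y hy]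
end A
end CubeRes

set_option linter.all false
set_option linter.unusedSimpArgs false
set_option linter.unusedVariables false
namespace CubeRes

abbrev B := ZMod 4 → ℤ

def rho (y : Y) : Y := ![y 0, - y 2, y 1, - y 3, y 4]

def eps (y : Y) : ℤ := sg (y 3) * (if y 2 % 2 = 1 ∧ ¬ y 1 % 2 = 1 then -1 else 1)

def Sm (f : Y → B) : Y → B := fun y k => eps y * f (rho y) (k + 1)

def Nm (f : Y → B) : Y → B := f + Sm f + Sm (Sm f) + Sm (Sm (Sm f))

def dn (n : ℕ) (f : Y → B) : Y → B := fun y =>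
  if (n + 1 + oddc y) % 2 = 0 then Nm f y + del f y else Sm f y - f y - del f y

lemma oddc_rho (y : Y) : oddc (rho y) = oddc y := by
  unfold oddc
  have h : ∀ a : ℤ, (if -a % 2 = 1 then 1 else 0) = (if a % 2 = 1 then 1 else 0 : ℕ) := by
    intro a; split_ifs <;> omega
  simp only [Fin.sum_univ_five]
  change (if y 0 % 2 = 1 then 1 else 0) + (if - y 2 % 2 = 1 then 1 else 0) +
    (if y 1 % 2 = 1 then 1 else 0) + (if - y 3 % 2 = 1 then 1 else 0) +
    (if y 4 % 2 = 1 then 1 else 0) = _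
  rw [h, h]
  ring

lemma sg_cases (a : ℤ) : sg a = 1 ∨ sg a = -1 := by unfold sg; split_ifs <;> simp

lemma Sm_four (f : Y → B) : Sm (Sm (Sm (Sm f))) = f := by
  funext y k
  unfold Sm
  have hr : rho (rho (rho (rho y))) = y := by
    funext i; fin_cases i <;> simp [rho]
  have hk : k + 1 + 1 + 1 + 1 = k := by revert k; decide
  have he : eps y * (eps (rho y) * (eps (rho (rho y)) * eps (rho (rho (rho y))))) = 1 := by
    simp only [eps, rho, sg]
    have h : ∀ a : ℤ, (-a % 2 = 1) ↔ (a % 2 = 1) := by intro a; omega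
    simp [h]
    split_ifs <;> simp_all
  rw [hr, hk]
  calc _ = (eps y * (eps (rho y) * (eps (rho (rho y)) * eps (rho (rho (rho y)))))) * f y k := by ring
    _ = _ := by rw [he, one_mul]

lemma Sm_add (f g : Y → B) : Sm (f + g) = Sm f + Sm g := by
  funext y k; simp [Sm, mul_add]
lemma Sm_neg (f : Y → B) : Sm (-f) = - Sm f := by
  funext y k; simp [Sm]
lemma Sm_sub (f g : Y → B) : Sm (f - g) = Sm f - Sm g := by
  rw [sub_eq_add_neg, Sm_add, Sm_neg, sub_eq_add_neg]
lemma Nm_add (f g : Y → B) : Nm (f + g) = Nm f + Nm g := by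
  simp only [Nm, Sm_add]; abel
lemma Nm_neg (f : Y → B) : Nm (-f) = - Nm f := by
  simp only [Nm, Sm_neg]; abel
lemma Nm_sub (f g : Y → B) : Nm (f - g) = Nm f - Nm g := by
  rw [sub_eq_add_neg, Nm_add, Nm_neg, sub_eq_add_neg]

lemma Nm_Sm (f : Y → B) : Nm (Sm f) = Nm f := by
  simp only [Nm, Sm_four]; abel
lemma Sm_Nm (f : Y → B) : Sm (Nm f) = Nm f := by
  simp only [Nm, Sm_four, Sm_add]; abel

lemma Sm_congr (f g : Y → B) (y : Y) (h : ∀ z, oddc z = oddc y → f z = g z) : Sm f y = Sm g y := by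
  funext k
  unfold Sm
  rw [h _ (oddc_rho y)]

lemma Nm_congr (f g : Y → B) (y : Y) (h : ∀ z, oddc z = oddc y → f z = g z) : Nm f y = Nm g y := by
  have h1 : ∀ z, oddc z = oddc y → Sm f z = Sm g z := fun z hz =>
    Sm_congr f g z fun w hw => h w (hw.trans hz)
  have h2 : ∀ z, oddc z = oddc y → Sm (Sm f) z = Sm (Sm g) z := fun z hz =>
    Sm_congr _ _ z fun w hw => h1 w (hw.trans hz)
  have h3 : ∀ z, oddc z = oddc y → Sm (Sm (Sm f)) z = Sm (Sm (Sm g)) z := fun z hz =>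
    Sm_congr _ _ z fun w hw => h2 w (hw.trans hz)
  simp only [Nm, Pi.add_apply, h y rfl, h1 y rfl, h2 y rfl, h3 y rfl]

lemma Sm_zero : Sm 0 = 0 := by funext y k; simp [Sm]
lemma Nm_zero : Nm 0 = 0 := by simp [Nm, Sm_zero]
lemma Sm_eq_zero (f : Y → B) (y : Y) (h : ∀ z, oddc z = oddc y → f z = 0) : Sm f y = 0 := by
  rw [Sm_congr f 0 y h, Sm_zero]; rfl
lemma Nm_eq_zero (f : Y → B) (y : Y) (h : ∀ z, oddc z = oddc y → f z = 0) : Nm f y = 0 := by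
  rw [Nm_congr f 0 y h, Nm_zero]; rfl

lemma sgn0 (y : Y) : sgn 0 y = 1 := by
  have : Finset.univ.filter (· < (0 : Fin 5)) = ∅ := by decide
  simp [sgn, this]
lemma sgn1 (y : Y) : sgn 1 y = sg (y 0) := by
  have : Finset.univ.filter (· < (1 : Fin 5)) = {0} := by decide
  unfold sgn
  rw [this, Finset.prod_singleton]
lemma sgn2 (y : Y) : sgn 2 y = sg (y 0) * sg (y 1) := by
  have : Finset.univ.filter (· < (2 : Fin 5)) = {0, 1} := by decide
  simp [sgn, this]
lemma sgn3 (y : Y) : sgn 3 y = sg (y 0) * sg (y 1) * sg (y 2) := by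
  have : Finset.univ.filter (· < (3 : Fin 5)) = {0, 1, 2} := by decide
  simp [sgn, this, mul_assoc]
lemma sgn4 (y : Y) : sgn 4 y = sg (y 0) * sg (y 1) * sg (y 2) * sg (y 3) := by
  have : Finset.univ.filter (· < (4 : Fin 5)) = {0, 1, 2, 3} := by decide
  simp [sgn, this, mul_assoc]

lemma sg_neg (a : ℤ) : sg (-a) = sg a := by unfold sg; split_ifs <;> omega

lemma rho_add0 (y : Y) : rho (y + e 0) = rho y + e 0 := by
  funext i; fin_cases i <;> simp [rho, e, Pi.single_apply]
lemma rho_add1 (y : Y) : rho (y + e 1) = rho y + e 2 := by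
  funext i; fin_cases i <;> simp [rho, e, Pi.single_apply]
lemma rho_add2 (y : Y) : rho (y + e 2) = rho y - e 1 := by
  funext i; fin_cases i <;> simp [rho, e, Pi.single_apply]; ring
lemma rho_add3 (y : Y) : rho (y + e 3) = rho y - e 3 := by
  funext i; fin_cases i <;> simp [rho, e, Pi.single_apply]; ring
lemma rho_add4 (y : Y) : rho (y + e 4) = rho y + e 4 := by
  funext i; fin_cases i <;> simp [rho, e, Pi.single_apply]
lemma rho_sub0 (y : Y) : rho (y - e 0) = rho y - e 0 := by
  funext i; fin_cases i <;> simp [rho, e, Pi.single_apply]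
lemma rho_sub1 (y : Y) : rho (y - e 1) = rho y - e 2 := by
  funext i; fin_cases i <;> simp [rho, e, Pi.single_apply]
lemma rho_sub2 (y : Y) : rho (y - e 2) = rho y + e 1 := by
  funext i; fin_cases i <;> simp [rho, e, Pi.single_apply]; ring
lemma rho_sub3 (y : Y) : rho (y - e 3) = rho y + e 3 := by
  funext i; fin_cases i <;> simp [rho, e, Pi.single_apply]; ring
lemma rho_sub4 (y : Y) : rho (y - e 4) = rho y - e 4 := by
  funext i; fin_cases i <;> simp [rho, e, Pi.single_apply]

lemma negodd (a : ℤ) : (-a % 2 = 1) ↔ (a % 2 = 1) := by omega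

lemma odd_add (a : ℤ) : ((a + 1) % 2 = 1) ↔ ¬ (a % 2 = 1) := by omega
lemma odd_sub (a : ℤ) : ((a - 1) % 2 = 1) ↔ ¬ (a % 2 = 1) := by omega

lemma eps_a0 (y : Y) : eps (y + e 0) = eps y := by simp [eps, e, Pi.single_apply]
lemma eps_s0 (y : Y) : eps (y - e 0) = eps y := by simp [eps, e, Pi.single_apply]
lemma eps_a4 (y : Y) : eps (y + e 4) = eps y := by simp [eps, e, Pi.single_apply]
lemma eps_s4 (y : Y) : eps (y - e 4) = eps y := by simp [eps, e, Pi.single_apply]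
lemma eps_a3 (y : Y) : eps (y + e 3) = - eps y := by
  simp [eps, e, Pi.single_apply, sg_add_one]
  split_ifs <;> simp
lemma eps_s3 (y : Y) : eps (y - e 3) = - eps y := by
  simp [eps, e, Pi.single_apply, sg_sub_one]
  split_ifs <;> simp
lemma sgr3 (y : Y) : sgn 3 (rho y) = sgn 3 y := by
  rw [sgn3, sgn3]
  change sg (y 0) * sg (- y 2) * sg (y 1) = _
  rw [sg_neg]; ring
lemma sgr4 (y : Y) : sgn 4 (rho y) = sgn 4 y := by
  rw [sgn4, sgn4]
  change sg (y 0) * sg (- y 2) * sg (y 1) * sg (- y 3) = _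
  rw [sg_neg, sg_neg]; ring
lemma sgr1a (y : Y) (h : y 2 % 2 = 1) : eps y * sgn 1 (rho y) = - sgn 2 y * eps (y + e 2) := by
  rw [sgn1, sgn2]
  change eps y * sg (y 0) = _
  have h2 : ¬ (y 2 + 1) % 2 = 1 := by omega
  by_cases h1 : y 1 % 2 = 1
  · simp [eps, e, Pi.single_apply, sg, h, h1]
    try (split_ifs <;> simp)
  · simp [eps, e, Pi.single_apply, sg, h, h1, h2]
    try (split_ifs <;> simp)
lemma sgr1s (y : Y) (h : y 2 % 2 = 1) : eps y * sgn 1 (rho y) = - sgn 2 y * eps (y - e 2) := by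
  rw [sgr1a y h]
  simp [eps, e, Pi.single_apply, odd_add, odd_sub]
lemma sgr2a (y : Y) (h : y 1 % 2 = 1) : eps y * sgn 2 (rho y) = sgn 1 y * eps (y + e 1) := by
  rw [sgn1, sgn2]
  change eps y * (sg (y 0) * sg (- y 2)) = _
  rw [sg_neg]
  have h2 : ¬ (y 1 + 1) % 2 = 1 := by omega
  by_cases h1 : y 2 % 2 = 1
  · simp [eps, e, Pi.single_apply, sg, h, h1, h2]
    try (split_ifs <;> simp)
  · simp [eps, e, Pi.single_apply, sg, h, h1, h2]
    try (split_ifs <;> simp)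
lemma sgr2s (y : Y) (h : y 1 % 2 = 1) : eps y * sgn 2 (rho y) = sgn 1 y * eps (y - e 1) := by
  rw [sgr2a y h]
  simp [eps, e, Pi.single_apply, odd_add, odd_sub]

lemma Sdl0 (f : Y → B) (y : Y) : Sm (dl 0 f) y = dl 0 (Sm f) y := by
  funext k
  by_cases h : y 0 % 2 = 1
  · have h' : rho y 0 % 2 = 1 := h
    simp only [Sm, dl, if_pos h, if_pos h', Pi.smul_apply, Pi.sub_apply, rho_add0, rho_sub0, smul_eq_mul]
    rw [eps_a0, eps_s0, sgn0, sgn0]; ring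
  · have h' : ¬ rho y 0 % 2 = 1 := h
    simp only [Sm, dl, if_neg h, if_neg h']; simp

lemma Sdl4 (f : Y → B) (y : Y) : Sm (dl 4 f) y = dl 4 (Sm f) y := by
  funext k
  by_cases h : y 4 % 2 = 1
  · have h' : rho y 4 % 2 = 1 := h
    simp only [Sm, dl, if_pos h, if_pos h', Pi.smul_apply, Pi.sub_apply, rho_add4, rho_sub4, smul_eq_mul]
    rw [eps_a4, eps_s4, sgr4]; ring
  · have h' : ¬ rho y 4 % 2 = 1 := h
    simp only [Sm, dl, if_neg h, if_neg h']; simp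

lemma Sdl3 (f : Y → B) (y : Y) : Sm (dl 3 f) y = dl 3 (Sm f) y := by
  funext k
  by_cases h : y 3 % 2 = 1
  · have h' : rho y 3 % 2 = 1 := (negodd _).2 h
    simp only [Sm, dl, if_pos h, if_pos h', Pi.smul_apply, Pi.sub_apply, rho_add3, rho_sub3, smul_eq_mul]
    rw [eps_a3, eps_s3, sgr3]; ring
  · have h' : ¬ rho y 3 % 2 = 1 := fun hh => h ((negodd _).1 hh)
    simp only [Sm, dl, if_neg h, if_neg h']; simp

lemma Sdl1 (f : Y → B) (y : Y) : Sm (dl 1 f) y = dl 2 (Sm f) y := by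
  funext k
  by_cases h : y 2 % 2 = 1
  · have h' : rho y 1 % 2 = 1 := (negodd _).2 h
    simp only [Sm, dl, if_pos h, if_pos h', Pi.smul_apply, Pi.sub_apply, rho_add2, rho_sub2, smul_eq_mul]
    linear_combination (f (rho y + e 1) (k + 1)) * sgr1s y h - (f (rho y - e 1) (k + 1)) * sgr1a y h
  · have h' : ¬ rho y 1 % 2 = 1 := fun hh => h ((negodd _).1 hh)
    simp only [Sm, dl, if_neg h, if_neg h']; simp

lemma Sdl2 (f : Y → B) (y : Y) : Sm (dl 2 f) y = dl 1 (Sm f) y := by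
  funext k
  by_cases h : y 1 % 2 = 1
  · have h' : rho y 2 % 2 = 1 := h
    simp only [Sm, dl, if_pos h, if_pos h', Pi.smul_apply, Pi.sub_apply, rho_add1, rho_sub1, smul_eq_mul]
    linear_combination (f (rho y + e 2) (k + 1)) * sgr2a y h - (f (rho y - e 2) (k + 1)) * sgr2s y h
  · have h' : ¬ rho y 2 % 2 = 1 := h
    simp only [Sm, dl, if_neg h, if_neg h']; simp

lemma Sm_del (f : Y → B) : Sm (del f) = del (Sm f) := by
  funext y
  have h0 : del f = dl 0 f + dl 1 f + dl 2 f + dl 3 f + dl 4 f := by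
    funext z; simp [del, Fin.sum_univ_five]
  rw [h0]
  simp only [Sm_add, Pi.add_apply, Sdl0, Sdl1, Sdl2, Sdl3, Sdl4, del, Fin.sum_univ_five]
  abel

lemma Nm_del (f : Y → B) : Nm (del f) = del (Nm f) := by
  simp only [Nm, Sm_del, del_add]

lemma dn_even (n : ℕ) (f : Y → B) (y : Y) (h : (n + 1 + oddc y) % 2 = 0) :
    dn n f y = Nm f y + del f y := if_pos h
lemma dn_odd (n : ℕ) (f : Y → B) (y : Y) (h : ¬ (n + 1 + oddc y) % 2 = 0) :
    dn n f y = Sm f y - f y - del f y := if_neg h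

lemma dn_add (n : ℕ) (f g : Y → B) : dn n (f + g) = dn n f + dn n g := by
  funext y
  unfold dn
  simp only [Nm_add, Sm_add, del_add, Pi.add_apply]
  split_ifs <;> abel
lemma dn_neg (n : ℕ) (f : Y → B) : dn n (-f) = - dn n f := by
  funext y
  unfold dn
  simp only [Nm_neg, Sm_neg, del_neg, Pi.neg_apply]
  split_ifs <;> abel
lemma dn_sub (n : ℕ) (f g : Y → B) : dn n (f - g) = dn n f - dn n g := by
  rw [sub_eq_add_neg, dn_add, dn_neg, sub_eq_add_neg]

lemma dn_dn (n : ℕ) (f : Y → B) : dn (n + 1) (dn n f) = 0 := by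
  funext y
  by_cases h : (n + 1 + 1 + oddc y) % 2 = 0
  · rw [dn_even _ _ _ h]
    have h1 : Nm (dn n f) y = Nm (Sm f - f - del f) y := Nm_congr _ _ _ fun z hz => by
      rw [dn_odd _ _ _ (by omega)]; rfl
    have h2 : del (dn n f) y = del (Nm f + del f) y := del_congr _ _ _ fun z hz => by
      rw [dn_even _ _ _ (by omega)]; rfl
    rw [h1, h2]
    simp only [Nm_sub, Nm_Sm, Nm_del, del_add, del_del, Pi.add_apply, Pi.sub_apply, Pi.zero_apply]
    abel
  · rw [dn_odd _ _ _ h]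
    have h1 : Sm (dn n f) y = Sm (Nm f + del f) y := Sm_congr _ _ _ fun z hz => by
      rw [dn_even _ _ _ (by omega)]; rfl
    have h2 : del (dn n f) y = del (Sm f - f - del f) y := del_congr _ _ _ fun z hz => by
      rw [dn_odd _ _ _ (by omega)]; rfl
    rw [h1, h2, dn_even _ _ _ (by omega)]
    simp only [Sm_add, Sm_Nm, Sm_del, del_sub, del_del, Pi.add_apply, Pi.sub_apply, Pi.zero_apply]
    abel

/-- support condition -/
def Supp (n : ℕ) (f : Y → B) : Prop := ∀ y, n < oddc y → f y = 0

lemma dn_supp' (n j : ℕ) (f : Y → B) (hf : Supp j f) : Supp (j + 1) (dn n f) := by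
  intro y hy
  have h1 := Nm_eq_zero f y fun z hz => hf z (by omega)
  have h2 := Sm_eq_zero f y fun z hz => hf z (by omega)
  have h3 := del_eq_zero f y fun z hz => hf z (by omega)
  unfold dn
  rw [h1, h2, h3, hf y (by omega)]
  simp

lemma dn_supp (n : ℕ) (f : Y → B) (hf : Supp n f) : Supp (n + 1) (dn n f) := dn_supp' n n f hf

lemma lower (n j : ℕ) (hj : j ≤ n) (f : Y → B) (hf : Supp (j + 1) f) (hd : dn (n + 1) f = 0) :
    ∃ g, Supp n g ∧ Supp j (f - dn n g) := by
  let F : Y → B := fun y => if oddc y = j + 1 then f y else 0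
  have hF : ∀ y, oddc y ≠ j + 1 → F y = 0 := fun y hy => if_neg hy
  have hdF : del F = 0 := by
    funext y
    by_cases hy : oddc y = j + 2
    · have h1 : del F y = del f y := del_congr _ _ _ fun z hz => if_pos (by omega)
      rw [h1]
      have h2 := congrFun hd y
      have h3 := Nm_eq_zero f y fun z hz => hf z (by omega)
      have h4 := Sm_eq_zero f y fun z hz => hf z (by omega)
      unfold dn at h2
      rw [h3, h4, hf y (by omega)] at h2
      split_ifs at h2
      · simpa using h2
      · simpa using h2
    · exact del_eq_zero _ _ fun z hz => hF z (by omega)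
  obtain ⟨G, hG, hGF⟩ := del_exact j F hF hdF
  have hGS : Supp j G := fun y hy => hG y (by omega)
  by_cases hp : (n + 1 + (j + 1)) % 2 = 0
  · refine ⟨G, fun y hy => hG y (by omega), fun y hy => ?_⟩
    by_cases hy' : oddc y = j + 1
    · rw [Pi.sub_apply, dn_even _ _ _ (by rw [hy']; exact hp),
        Nm_eq_zero G y fun z hz => hG z (by omega), hGF, show F y = f y from if_pos hy']
      simp
    · rw [Pi.sub_apply, hf y (by omega), dn_supp' n j G hGS y (by omega), sub_zero]
  · refine ⟨-G, fun y hy => ?_, fun y hy => ?_⟩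
    · rw [Pi.neg_apply, hG y (by omega), neg_zero]
    by_cases hy' : oddc y = j + 1
    · rw [dn_neg, Pi.sub_apply, Pi.neg_apply, dn_odd _ _ _ (by rw [hy']; exact hp),
        Sm_eq_zero G y fun z hz => hG z (by omega), hGF, show F y = f y from if_pos hy',
        hG y (by omega)]
      simp
    · rw [dn_neg, Pi.sub_apply, Pi.neg_apply, hf y (by omega), dn_supp' n j G hGS y (by omega)]
      simp

end CubeRes

namespace CubeRes

lemma lower_all (n : ℕ) : ∀ j, j ≤ n + 1 → ∀ f : Y → B, Supp j f → dn (n + 1) f = 0 →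
    ∃ g, Supp n g ∧ Supp 0 (f - dn n g) := by
  intro j
  induction j with
  | zero =>
    intro _ f hf _
    refine ⟨0, fun y _ => rfl, ?_⟩
    have : dn n (0 : Y → B) = 0 := by
      have := dn_sub n 0 0
      simpa using this
    rw [this, sub_zero]; exact hf
  | succ j ih =>
    intro hj f hf hd
    obtain ⟨g, hg, hg'⟩ := lower n j (by omega) f hf hd
    obtain ⟨g2, hg2, hg2'⟩ := ih (by omega) _ hg' (by rw [dn_sub, hd, dn_dn, sub_zero])
    refine ⟨g + g2, fun y hy => ?_, ?_⟩
    · rw [Pi.add_apply, hg y hy, hg2 y hy, add_zero]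
    · rw [dn_add, ← sub_sub]; exact hg2'

lemma oddc_zero_iff (y : Y) : oddc y = 0 ↔ ∀ i, ¬ y i % 2 = 1 := by
  unfold oddc
  rw [Finset.sum_eq_zero_iff]
  constructor
  · intro h i hi
    have := h i (Finset.mem_univ i)
    rw [if_pos hi] at this
    omega
  · intro h i _
    rw [if_neg (h i)]

def cst (φ : B) : Y → B := fun y => if oddc y = 0 then φ else 0

lemma step_even (m : ℕ) (f : Y → B) (hf : Supp 0 f) (hd : dn m f = 0) (z : Y) (hz : oddc z = 0)
    (i : Fin 5) : f (z + e i + e i) = f z := by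
  have hz' := (oddc_zero_iff z).1 hz
  have hodd : (z + e i) i % 2 = 1 := by
    have := hz' i
    simp [e]; omega
  have h1 : oddc (z + e i) = 1 := by
    have := oddc_sub (z + e i) i hodd
    rw [add_sub_cancel_right] at this
    omega
  have hdel : del f (z + e i) = 0 := by
    have h2 := congrFun hd (z + e i)
    have h3 := Nm_eq_zero f (z + e i) fun w hw => hf w (by omega)
    have h4 := Sm_eq_zero f (z + e i) fun w hw => hf w (by omega)
    unfold dn at h2
    rw [h3, h4, hf (z + e i) (by omega)] at h2
    split_ifs at h2
    · simpa using h2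
    · simpa using h2
  have : del f (z + e i) = dl i f (z + e i) := by
    unfold del
    refine Finset.sum_eq_single i (fun j _ hj => ?_) (by simp)
    unfold dl
    rw [if_neg]
    have := hz' j
    simpa [e, Pi.single_apply, hj] using this
  rw [this] at hdel
  unfold dl at hdel
  rw [if_pos hodd, add_sub_cancel_right] at hdel
  have hs : sgn i (z + e i) * sgn i (z + e i) = 1 := by
    unfold sgn
    rw [← Finset.prod_mul_distrib]
    refine Finset.prod_eq_one fun j _ => ?_
    rcases sg_cases ((z + e i) j) with h | h <;> rw [h] <;> norm_num
  have h5 := congrArg (fun t => sgn i (z + e i) • t) hdel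
  simp only [smul_smul, hs, one_smul, smul_zero] at h5
  exact sub_eq_zero.1 h5

lemma step_all (m : ℕ) (f : Y → B) (hf : Supp 0 f) (hd : dn m f = 0) (i : Fin 5) (t : ℤ) :
    ∀ w : Y, f ((2 : ℤ) • w + (2 * t) • e i) = f ((2 : ℤ) • w) := by
  have hev : ∀ w : Y, oddc ((2 : ℤ) • w) = 0 := fun w => (oddc_zero_iff _).2 fun i => by
    simp
  have h1 : ∀ w : Y, ∀ s : ℤ, f ((2 : ℤ) • w + (2 * (s + 1)) • e i) = f ((2 : ℤ) • w + (2 * s) • e i) := by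
    intro w s
    have := step_even m f hf hd ((2 : ℤ) • (w + s • e i)) (hev _) i
    convert this using 2
    · module
    · module
  induction t using Int.induction_on with
  | zero => intro w; simp
  | succ t ih => intro w; rw [h1, ih]
  | pred t ih =>
    intro w
    rw [← ih w, ← h1 w (-(t : ℤ) - 1), sub_add_cancel]

lemma eq_cst (m : ℕ) (f : Y → B) (hf : Supp 0 f) (hd : dn m f = 0) : f = cst (f 0) := by
  funext y
  unfold cst
  split_ifs with hy
  · have hy' := (oddc_zero_iff y).1 hy
    have e1 : y = (2 : ℤ) • (((((0 : Y) + (y 0 / 2) • e 0) + (y 1 / 2) • e 1) + (y 2 / 2) • e 2) + (y 3 / 2) • e 3) +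
        (2 * (y 4 / 2)) • e 4 := by
      funext i
      have h0 := hy' 0
      have h1 := hy' 1
      have h2 := hy' 2
      have h3 := hy' 3
      have h4 := hy' 4
      fin_cases i <;> simp [e, Pi.single_apply] <;> omega
    rw [e1, step_all m f hf hd, smul_add, smul_smul, step_all m f hf hd, smul_add, smul_smul,
      step_all m f hf hd, smul_add, smul_smul, step_all m f hf hd, smul_add, smul_smul,
      step_all m f hf hd, smul_zero]
  · exact hf y (by omega)

lemma del_cst (φ : B) : del (cst φ) = 0 := by
  funext y
  refine Finset.sum_eq_zero fun i _ => ?_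
  unfold dl cst
  split_ifs with h h1 h2 h2
  all_goals try simp
  · have := oddc_add y i h
    have := oddc_sub y i h
    omega
  · have := oddc_add y i h
    have := oddc_sub y i h
    omega

def shB (φ : B) : B := fun k => φ (k + 1)

lemma Sm_cst (φ : B) : Sm (cst φ) = cst (shB φ) := by
  funext y k
  unfold Sm cst
  rw [oddc_rho]
  split_ifs with h
  · have h' := (oddc_zero_iff y).1 h
    have : eps y = 1 := by
      unfold eps sg
      rw [if_neg (h' 3), if_neg (fun hh => h' 2 hh.1)]; rfl
    rw [this, one_mul]; rfl
  · simp

lemma cst_add (φ ψ : B) : cst φ + cst ψ = cst (φ + ψ) := by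
  funext y; simp only [cst, Pi.add_apply]; split_ifs <;> simp
lemma cst_sub (φ ψ : B) : cst φ - cst ψ = cst (φ - ψ) := by
  funext y; simp only [cst, Pi.sub_apply]; split_ifs <;> simp

lemma dn_cst (n : ℕ) (φ : B) : dn n (cst φ) = cst (if (n + 1) % 2 = 0 then
    φ + shB φ + shB (shB φ) + shB (shB (shB φ)) else shB φ - φ) := by
  funext y
  by_cases hy : oddc y = 0
  · unfold dn
    rw [hy, add_zero, del_cst]
    unfold Nm
    simp only [Sm_cst]
    split_ifs <;> simp [cst_add, cst_sub, cst, hy]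
  · unfold dn
    rw [del_cst]
    unfold Nm
    simp only [Sm_cst]
    split_ifs <;> simp [cst_add, cst_sub, cst, hy]

lemma oddc_zero : oddc 0 = 0 := (oddc_zero_iff 0).2 fun i => by simp

lemma cst_at (φ : B) : cst φ 0 = φ := if_pos oddc_zero

lemma cst_supp (n : ℕ) (φ : B) : Supp n (cst φ) := fun y hy => if_neg (by omega)

lemma base0 (f : Y → B) (hf : Supp 0 f) (hd : dn 0 f = 0) : ∃ a : ℤ, f = cst (fun _ => a) := by
  have h := eq_cst 0 f hf hd
  have h1 := congrFun hd 0
  rw [h, dn_cst, cst_at] at h1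
  simp only [zero_add, Nat.one_mod, one_ne_zero, if_false] at h1
  refine ⟨f 0 0, h.trans (congrArg cst ?_)⟩
  have h2 : ∀ k, f 0 (k + 1) = f 0 k := fun k => by
    have := congrFun h1 k
    simp [shB] at this
    omega
  funext k
  have a0 := h2 0
  have a1 := h2 1
  have a2 := h2 2
  have b1 : (1 : ZMod 4) + 1 = 2 := by decide
  have b2 : (2 : ZMod 4) + 1 = 3 := by decide
  rw [zero_add] at a0
  rw [b1] at a1
  rw [b2] at a2
  fin_cases k
  · rfl
  · exact a0
  · exact a1.trans a0
  · exact a2.trans (a1.trans a0)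

def mkB (a b c d : ℤ) : B := fun k : Fin 4 => (![a, b, c, d] : Fin 4 → ℤ) k

lemma base_succ (n : ℕ) (f : Y → B) (hf : Supp 0 f) (hd : dn (n + 1) f = 0) :
    ∃ g, Supp n g ∧ dn n g = f := by
  have h := eq_cst (n + 1) f hf hd
  have h1 := congrFun hd 0
  rw [h, dn_cst, cst_at] at h1
  generalize f 0 = φ at h h1
  have b0 : (0 : ZMod 4) + 1 = 1 := by decide
  have b1 : (1 : ZMod 4) + 1 = 2 := by decide
  have b2 : (2 : ZMod 4) + 1 = 3 := by decide
  have b3 : (3 : ZMod 4) + 1 = 0 := by decide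
  by_cases hp : (n + 1 + 1) % 2 = 0
  · rw [if_pos hp] at h1
    refine ⟨cst (mkB 0 (φ 0) (φ 0 + φ 1) (φ 0 + φ 1 + φ 2)), cst_supp _ _, ?_⟩
    rw [dn_cst, if_neg (by omega), h]
    congr 1
    have h2 := congrFun h1 0
    simp only [shB, Pi.add_apply, b0, b1, b2, b3, Pi.zero_apply] at h2
    funext k
    fin_cases k
    · change φ 0 - 0 = φ 0; ring
    · change φ 0 + φ 1 - φ 0 = φ 1; ring
    · change φ 0 + φ 1 + φ 2 - (φ 0 + φ 1) = φ 2; ring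
    · change 0 - (φ 0 + φ 1 + φ 2) = φ 3; linarith
  · rw [if_neg hp] at h1
    refine ⟨cst (mkB (φ 0) 0 0 0), cst_supp _ _, ?_⟩
    rw [dn_cst, if_pos (by omega), h]
    congr 1
    have h2 := congrFun h1 0
    have h3 := congrFun h1 1
    have h4 := congrFun h1 2
    simp only [shB, Pi.add_apply, Pi.sub_apply, b0, b1, b2, b3, Pi.zero_apply] at h2 h3 h4
    funext k
    fin_cases k
    · change φ 0 + 0 + 0 + 0 = φ 0; ring
    · change 0 + 0 + 0 + φ 0 = φ 1; linarith
    · change 0 + 0 + φ 0 + 0 = φ 2; linarith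
    · change 0 + φ 0 + 0 + 0 = φ 3; linarith

theorem dn_exact (n : ℕ) (f : Y → B) (hf : Supp (n + 1) f) (hd : dn (n + 1) f = 0) :
    ∃ g, Supp n g ∧ dn n g = f := by
  obtain ⟨g, hg, hg'⟩ := lower_all n (n + 1) le_rfl f hf hd
  obtain ⟨g2, hg2, hg2'⟩ := base_succ n _ hg' (by rw [dn_sub, hd, dn_dn, sub_zero])
  refine ⟨g + g2, fun y hy => ?_, ?_⟩
  · rw [Pi.add_apply, hg y hy, hg2 y hy, add_zero]
  · rw [dn_add, hg2']; abel

end CubeRes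

namespace CubeRes
open CategoryTheory

abbrev Gam : Type := Crystal.Crys 4 holM holM_pow

abbrev phi : Multiplicative (ZMod 4) →* MulAut (Crystal.Lat 5) := Crystal.matAction 4 holM holM_pow

lemma phi_one (v : Crystal.Lat 5) :
    (phi (Multiplicative.ofAdd 1) v).toAdd = holM.mulVec v.toAdd := by
  have h : phi (Multiplicative.ofAdd 1) = Crystal.glToAut 5 (Crystal.matUnit holM 3 holM_pow) :=
    pow_one _
  rw [h]
  rfl

def iot (v : Fin 5 → ℤ) : Y := ![v 2 + v 3 - v 4, v 2 + v 4, v 3, v 0, v 1]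

lemma iot_add (v w : Fin 5 → ℤ) : iot (v + w) = iot v + iot w := by
  funext i; fin_cases i <;> simp [iot] <;> ring

lemma rho_iot (v : Fin 5 → ℤ) : rho (iot (holM.mulVec v)) = iot v := by
  funext i; fin_cases i <;> simp [iot, rho, holM, Matrix.mulVec, dotProduct, Fin.sum_univ_five] <;> ring

lemma rho_add (y z : Y) : rho (y + z) = rho y + rho z := by
  funext i; fin_cases i <;> simp [rho] <;> ring
lemma rho_sub (y z : Y) : rho (y - z) = rho y - rho z := by
  funext i; fin_cases i <;> simp [rho] <;> ring
lemma rho_smul (c : ℤ) (y : Y) : rho (c • y) = c • rho y := by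
  funext i; fin_cases i <;> simp [rho]

def W0 (k : ZMod 4) (v : Crystal.Lat 5) : Y := iot (phi (Multiplicative.ofAdd (-k)) v).toAdd

lemma W0_mul (k) (v w : Crystal.Lat 5) : W0 k (v * w) = W0 k v + W0 k w := by
  unfold W0
  rw [map_mul, toAdd_mul, iot_add]

lemma W0_phi (k l) (v : Crystal.Lat 5) : W0 k (phi (Multiplicative.ofAdd l) v) = W0 (k - l) v := by
  unfold W0
  rw [← MulAut.mul_apply, ← map_mul, ← ofAdd_add]
  congr 5
  ring

lemma rho_W0 (k) (v : Crystal.Lat 5) : rho (W0 k v) = W0 (k + 1) v := by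
  unfold W0
  have : (-k : ZMod 4) = 1 + -(k + 1) := by ring
  rw [this, ofAdd_add, map_mul, MulAut.mul_apply, phi_one, rho_iot]

/-- right action on points -/
def Rt (g : Gam) (x : Y × ZMod 4) : Y × ZMod 4 :=
  (x.1 - (2 : ℤ) • W0 x.2 g.left, x.2 - g.right.toAdd)

lemma Rt_mul (g h : Gam) (x) : Rt (g * h) x = Rt h (Rt g x) := by
  unfold Rt
  refine Prod.ext ?_ ?_
  · simp only [SemidirectProduct.mul_left, W0_mul]
    have := W0_phi x.2 g.right.toAdd h.left
    rw [ofAdd_toAdd] at this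
    rw [this]
    module
  · simp only [SemidirectProduct.mul_right, toAdd_mul]
    abel

lemma Rt_one (x) : Rt 1 x = x := by
  unfold Rt
  refine Prod.ext ?_ ?_
  · simp only [SemidirectProduct.one_left]
    have : W0 x.2 1 = 0 := by
      have := W0_mul x.2 1 1
      rw [mul_one] at this
      simpa using this
    rw [this]; simp
  · simp

lemma oddc_even (y z : Y) : oddc (y - (2 : ℤ) • z) = oddc y := by
  unfold oddc
  refine Finset.sum_congr rfl fun i _ => ?_
  have : (y - (2 : ℤ) • z) i % 2 = y i % 2 := by simp [Int.sub_emod]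
  rw [this]

lemma par_even (y z : Y) (i) : (y - (2 : ℤ) • z) i % 2 = y i % 2 := by simp [Int.sub_emod]

lemma sg_even (y z : Y) (i) : sg ((y - (2 : ℤ) • z) i) = sg (y i) := by
  unfold sg; rw [par_even]

lemma eps_even (y z : Y) : eps (y - (2 : ℤ) • z) = eps y := by
  unfold eps; rw [par_even, par_even, sg_even]

lemma sgn_even (y z : Y) (i) : sgn i (y - (2 : ℤ) • z) = sgn i y := by
  unfold sgn; simp only [sg_even]

def actF (g : Gam) (f : Y → B) : Y → B := fun y k =>
  f (y - (2 : ℤ) • W0 k g.left) (k - g.right.toAdd)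

lemma actF_add (g f f') : actF g (f + f') = actF g f + actF g f' := rfl
lemma actF_sub (g f f') : actF g (f - f') = actF g f - actF g f' := rfl

lemma actF_mul (g h : Gam) (f) : actF (g * h) f = actF g (actF h f) := by
  funext y k
  change (fun x : Y × ZMod 4 => f x.1 x.2) (Rt (g * h) (y, k)) = (fun x : Y × ZMod 4 => f x.1 x.2) (Rt h (Rt g (y, k)))
  rw [Rt_mul]

lemma actF_one (f) : actF 1 f = f := by
  funext y k
  change (fun x : Y × ZMod 4 => f x.1 x.2) (Rt 1 (y, k)) = (fun x : Y × ZMod 4 => f x.1 x.2) (y, k)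
  rw [Rt_one]

lemma Sm_act (g f) : Sm (actF g f) = actF g (Sm f) := by
  funext y k
  simp only [Sm, actF]
  rw [eps_even, rho_sub, rho_smul, rho_W0]
  congr 2
  ring

lemma Nm_act (g f) : Nm (actF g f) = actF g (Nm f) := by
  simp only [Nm, Sm_act, actF_add]

lemma del_act (g f) : del (actF g f) = actF g (del f) := by
  funext y k
  simp only [actF, del, Finset.sum_apply]
  refine Finset.sum_congr rfl fun i _ => ?_
  unfold dl
  rw [par_even, sgn_even]
  split_ifs
  · simp only [Pi.smul_apply, Pi.sub_apply, actF]
    rw [show y + e i - (2 : ℤ) • W0 k g.left = y - (2 : ℤ) • W0 k g.left + e i by abel,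
      show y - e i - (2 : ℤ) • W0 k g.left = y - (2 : ℤ) • W0 k g.left - e i by abel]
  · rfl

lemma dn_act (n g f) : dn n (actF g f) = actF g (dn n f) := by
  funext y k
  unfold dn
  rw [Nm_act, del_act, Sm_act]
  simp only [actF, oddc_even]
  split_ifs <;> rfl

lemma supp_act (n : ℕ) (g f) (h : Supp n f) : Supp n (actF g f) := by
  intro y hy
  funext k
  unfold actF
  rw [h _ (by rw [oddc_even]; exact hy)]; rfl

def Vn (n : ℕ) : Submodule ℤ (Y → B) where
  carrier := {f | Supp n f}
  add_mem' := fun {a b} ha hb y hy => by rw [Pi.add_apply, ha y hy, hb y hy, add_zero]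
  zero_mem' := fun y _ => rfl
  smul_mem' := fun c f hf y hy => by rw [Pi.smul_apply, hf y hy, smul_zero]

def Vrho (n : ℕ) : Representation ℤ Gam (Vn n) where
  toFun g := 
    { toFun := fun f => ⟨actF g f.1, supp_act n g f.1 f.2⟩
      map_add' := fun _ _ => rfl
      map_smul' := fun _ _ => rfl }
  map_one' := by
    refine LinearMap.ext fun f => Subtype.ext ?_
    exact actF_one f.1
  map_mul' g h := by
    refine LinearMap.ext fun f => Subtype.ext ?_
    exact actF_mul g h f.1

noncomputable abbrev VR (n : ℕ) : Rep.{0} ℤ Gam := Rep.of (Vrho n)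

lemma dn_smul (n : ℕ) (c : ℤ) (f : Y → B) : dn n (c • f) = c • dn n f := by
  let L : (Y → B) →+ (Y → B) := AddMonoidHom.mk' (dn n) (dn_add n)
  exact map_zsmul L c f

noncomputable def dR (n : ℕ) : VR n ⟶ VR (n + 1) := Rep.ofHom
  { toFun := fun f : Vn n => (⟨dn n f.1, dn_supp n f.1 f.2⟩ : Vn (n + 1))
    map_add' := fun f g => Subtype.ext (dn_add n f.1 g.1)
    map_smul' := fun c f => Subtype.ext (dn_smul n c f.1)
    isIntertwining' := fun g => LinearMap.ext fun f => Subtype.ext (dn_act n g f.1) }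

lemma act_cst (g : Gam) (a : ℤ) : actF g (cst fun _ => a) = cst fun _ => a := by
  funext y k
  unfold actF cst
  rw [oddc_even]
  split_ifs <;> rfl

noncomputable def augR : Rep.trivial ℤ Gam ℤ ⟶ VR 0 := Rep.ofHom
  { toFun := fun a : ℤ => (⟨cst fun _ => a, cst_supp 0 _⟩ : Vn 0)
    map_add' := fun a b => Subtype.ext (cst_add _ _).symm
    map_smul' := fun c a => Subtype.ext (by 
      funext y; simp only [cst, Submodule.coe_smul, Pi.smul_apply]; split_ifs
      · rfl
      · simp)
    isIntertwining' := fun g => LinearMap.ext fun a => Subtype.ext (act_cst g a).symm }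

lemma augR_inj : Function.Injective augR.hom := by
  intro a b h
  have h1 : cst (fun _ => a) = cst (fun _ => b) := congrArg Subtype.val h
  have h2 := congrFun (congrFun h1 0) 0
  rw [cst_at, cst_at] at h2
  exact h2

lemma dR_zero (x : VR 0) : (dR 0).hom x = 0 ↔ ∃ a, augR.hom a = x := by
  constructor
  · intro h
    obtain ⟨a, ha⟩ := base0 x.1 x.2 (congrArg Subtype.val h)
    exact ⟨a, Subtype.ext ha.symm⟩
  · rintro ⟨a, rfl⟩
    refine Subtype.ext ?_
    change dn 0 (cst fun _ => a) = 0
    rw [dn_cst]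
    funext y
    unfold cst
    split_ifs
    · simp_all
    · funext k; simp [shB]
    · rfl

lemma dR_succ (n : ℕ) (x : VR (n + 1)) : (dR (n + 1)).hom x = 0 ↔ ∃ y, (dR n).hom y = x := by
  constructor
  · intro h
    obtain ⟨g, hg, hg'⟩ := dn_exact n x.1 x.2 (congrArg Subtype.val h)
    exact ⟨(⟨g, hg⟩ : Vn n), Subtype.ext hg'⟩
  · rintro ⟨a, rfl⟩
    exact Subtype.ext (dn_dn n _)

end CubeRes

namespace CubeRes
open CategoryTheory

def lam (y : Y) : Fin 5 → ℤ :=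
  ![y 3 / 2, y 4 / 2, y 1 / 2 + (y 0 - 2 * (y 1 / 2) - 2 * (y 2 / 2)) / 4, y 2 / 2,
    - ((y 0 - 2 * (y 1 / 2) - 2 * (y 2 / 2)) / 4)]

lemma lam_sub (y : Y) (v : Fin 5 → ℤ) : lam (y - (2 : ℤ) • iot v) = lam y - v := by
  funext i
  fin_cases i <;> simp [lam, iot] <;> omega

def gm (x : Y × ZMod 4) : Gam :=
  ⟨phi (Multiplicative.ofAdd x.2) (Multiplicative.ofAdd (lam x.1)), Multiplicative.ofAdd x.2⟩

lemma gm_Rt (g : Gam) (x) : g * gm (Rt g x) = gm x := by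
  obtain ⟨y, k⟩ := x
  refine SemidirectProduct.ext ?_ ?_
  · simp only [SemidirectProduct.mul_left, gm, Rt]
    rw [← MulAut.mul_apply, ← map_mul]
    have h1 : g.right * Multiplicative.ofAdd (k - g.right.toAdd) = Multiplicative.ofAdd k := by
      rw [ofAdd_sub, ofAdd_toAdd]; simp
    rw [h1]
    unfold W0
    rw [lam_sub, ofAdd_sub, ofAdd_toAdd, map_div, ← MulAut.mul_apply, ← map_mul, ofAdd_neg,
      mul_inv_cancel, map_one]
    simp
  · simp only [SemidirectProduct.mul_right, gm, Rt]
    rw [ofAdd_sub, ofAdd_toAdd]; simp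

lemma gm_Rt' (g : Gam) (x) : gm (Rt g x) = g⁻¹ * gm x := by
  rw [← gm_Rt g x, inv_mul_cancel_left]

noncomputable abbrev CW (n : ℕ) : Rep.{0} ℤ Gam :=
  Rep.coind (⊥ : Subgroup Gam).subtype (Rep.trivial ℤ (⊥ : Subgroup Gam) (Vn n))

noncomputable def iR (n : ℕ) : VR n ⟶ CW n := Rep.ofHom
  { toFun := fun f : Vn n => ⟨fun g => Vrho n g f, by
      rintro ⟨g, hg⟩ h
      rw [Subgroup.mem_bot] at hg
      subst hg
      change Vrho n (1 * h) f = Vrho n h f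
      rw [one_mul]⟩
    map_add' := fun f g => Subtype.ext (funext fun h => map_add (Vrho n h) f g)
    map_smul' := fun c f => Subtype.ext (funext fun h => map_smul (Vrho n h) c f)
    isIntertwining' := fun g => LinearMap.ext fun f => Subtype.ext (funext fun h => by
      change Vrho n h (Vrho n g f) = Vrho n (h * g) f
      rw [map_mul]; rfl) }

def pF (n : ℕ) (F : Gam → Vn n) : Y → B := fun y k =>
  (F (gm (y, k))⁻¹).1 (Rt (gm (y, k)) (y, k)).1 (Rt (gm (y, k)) (y, k)).2

lemma pF_supp (n : ℕ) (F : Gam → Vn n) : Supp n (pF n F) := by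
  intro y hy
  funext k
  have h := (F (gm (y, k))⁻¹).2 (Rt (gm (y, k)) (y, k)).1 (by
    change n < oddc (y - (2 : ℤ) • _)
    rw [oddc_even]; exact hy)
  unfold pF
  rw [h]; rfl

noncomputable def pR (n : ℕ) : CW n ⟶ VR n := Rep.ofHom
  { toFun := fun F => (⟨pF n F.1, pF_supp n F.1⟩ : Vn n)
    map_add' := fun f g => rfl
    map_smul' := fun c f => rfl
    isIntertwining' := fun g => LinearMap.ext fun F => Subtype.ext (funext fun y => funext fun k => by
      change (F.1 ((gm (y, k))⁻¹ * g)).1 (Rt (gm (y, k)) (y, k)).1 (Rt (gm (y, k)) (y, k)).2 =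
        (F.1 (gm (Rt g (y, k)))⁻¹).1 (Rt (gm (Rt g (y, k))) (Rt g (y, k))).1 (Rt (gm (Rt g (y, k))) (Rt g (y, k))).2
      rw [gm_Rt', ← Rt_mul, mul_inv_cancel_left, _root_.mul_inv_rev, inv_inv]) }

lemma iR_pR (n : ℕ) : iR n ≫ pR n = 𝟙 (VR n) := by
  refine Rep.hom_ext ?_
  refine DFunLike.ext _ _ fun f => Subtype.ext (funext fun y => funext fun k => ?_)
  change (fun x : Y × ZMod 4 => f.1 x.1 x.2) (Rt (gm (y, k))⁻¹ (Rt (gm (y, k)) (y, k))) =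
    (fun x : Y × ZMod 4 => f.1 x.1 x.2) (y, k)
  rw [← Rt_mul, mul_inv_cancel, Rt_one]

theorem VR_acyclic (n m : ℕ) : Limits.IsZero (groupCohomology (VR n) (m + 1)) :=
  AcyRes.isZero_of_retract (iR n) (pR n) (iR_pR n) (m + 1) (AcyRes.isZero_coind _ m)

/-- cohomology as that of the invariant complex, function level -/
theorem coh_main (n : ℕ) {T : Type} [AddCommGroup T] (ψ : (Y → B) →+ T)
    (hs : ∀ t, ∃ x, (∀ γ, actF γ x = x) ∧ Supp (n + 1) x ∧ dn (n + 1) x = 0 ∧ ψ x = t)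
    (hk : ∀ x, (∀ γ, actF γ x = x) → Supp (n + 1) x → dn (n + 1) x = 0 →
      (ψ x = 0 ↔ ∃ y, (∀ γ, actF γ y = y) ∧ Supp n y ∧ dn n y = x)) :
    Nonempty (H (n + 1) ≃+ T) := by
  refine AcyRes.acyc n (Rep.trivial ℤ Gam ℤ) VR dR augR augR_inj dR_zero dR_succ VR_acyclic
    (ψ.comp (Vn (n + 1)).subtype.toAddMonoidHom) ?_ ?_
  · intro t
    obtain ⟨x, h1, h2, h3, h4⟩ := hs t
    exact ⟨(⟨x, h2⟩ : Vn (n + 1)), fun γ => Subtype.ext (h1 γ), Subtype.ext h3, h4⟩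
  · intro x h1 h2
    refine (hk x.1 (fun γ => congrArg Subtype.val (h1 γ)) x.2 (congrArg Subtype.val h2)).trans ?_
    constructor
    · rintro ⟨y, h3, h4, h5⟩
      exact ⟨(⟨y, h4⟩ : Vn n), fun γ => Subtype.ext (h3 γ), Subtype.ext h5⟩
    · rintro ⟨y, h3, h5⟩
      exact ⟨y.1, fun γ => congrArg Subtype.val (h3 γ), y.2, congrArg Subtype.val h5⟩

end CubeRes

namespace CubeRes
open CategoryTheory

abbrev V := Fin 16 → ℤ

def hb (i : Fin 16) : Bool := decide (i.val / 8 % 2 = 1)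
def pb (i : Fin 16) : Bool := decide (i.val / 4 % 2 = 1)
def qb (i : Fin 16) : Bool := decide (i.val / 2 % 2 = 1)
def eb (i : Fin 16) : Bool := decide (i.val % 2 = 1)
def mkI (h p q e : Bool) : Fin 16 :=
  ⟨8 * h.toNat + 4 * p.toNat + 2 * q.toNat + e.toNat, by cases h <;> cases p <;> cases q <;> cases e <;> decide⟩
def wt (i : Fin 16) : ℕ := (hb i).toNat + (pb i).toNat + (qb i).toNat
def sgB (b : Bool) : ℤ := if b then -1 else 1

lemma hb_mk (h p q e) : hb (mkI h p q e) = h := by revert h p q e; decide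
lemma pb_mk (h p q e) : pb (mkI h p q e) = p := by revert h p q e; decide
lemma qb_mk (h p q e) : qb (mkI h p q e) = q := by revert h p q e; decide
lemma eb_mk (h p q e) : eb (mkI h p q e) = e := by revert h p q e; decide
lemma mk_b (i) : mkI (hb i) (pb i) (qb i) (eb i) = i := by revert i; decide

def SB (s : Bool) (x : V) : V := fun i =>
  sgB s * (if qb i && !pb i then -1 else 1) * x (mkI (hb i) (qb i) (pb i) (xor (eb i) (qb i)))

def dB (x : V) : V := fun i =>
  (if hb i then x (mkI false (pb i) (qb i) (!eb i)) - x (mkI false (pb i) (qb i) (eb i)) else 0) +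
  (if pb i then sgB (hb i) * (x (mkI (hb i) false (qb i) (!eb i)) - x (mkI (hb i) false (qb i) (eb i))) else 0) +
  (if qb i then sgB (hb i) * sgB (pb i) * (x (mkI (hb i) (pb i) false (!eb i)) - x (mkI (hb i) (pb i) false (eb i))) else 0)

def DB (s : Bool) (t : ℕ) (x : V) : V := fun i =>
  if (t + wt i) % 2 = 0 then x i + SB s x i + SB s (SB s x) i + SB s (SB s (SB s x)) i + dB x i
  else SB s x i - x i - dB x i

def od (a : ℤ) : Bool := decide (a % 2 = 1)

lemma od_neg (a : ℤ) : od (-a) = od a := by unfold od; simp only [negodd]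
lemma od_true (a : ℤ) : od a = true ↔ a % 2 = 1 := by simp [od]
lemma sg_od (a : ℤ) : sg a = sgB (od a) := by unfold sg sgB od; simp
lemma od_succ (a : ℤ) : od (a + 1) = !od a := by
  rw [Bool.eq_iff_iff]
  simp only [od, decide_eq_true_eq, Bool.not_eq_true', decide_eq_false_iff_not]
  omega
lemma od_pred (a : ℤ) : od (a - 1) = !od a := by
  rw [Bool.eq_iff_iff]
  simp only [od, decide_eq_true_eq, Bool.not_eq_true', decide_eq_false_iff_not]
  omega
lemma od_congr (a b : ℤ) (h : a % 2 = b % 2) : od a = od b := by unfold od; rw [h]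

def ee (y : Y) : Bool := od (y 0 / 2 + y 1 / 2 + y 2 / 2)
def idx (y : Y) : Fin 16 := mkI (od (y 0)) (od (y 1)) (od (y 2)) (ee y)

def ext (g : Bool → Bool → V) : Y → B := fun y _ => g (od (y 3)) (od (y 4)) (idx y)

lemma oddc_idx (y : Y) : oddc y = wt (idx y) + (od (y 3)).toNat + (od (y 4)).toNat := by
  unfold oddc wt idx
  rw [Fin.sum_univ_five, hb_mk, pb_mk, qb_mk]
  have h : ∀ a : ℤ, (if a % 2 = 1 then 1 else 0) = (od a).toNat := by
    intro a; unfold od; split_ifs with h <;> simp [h]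
  rw [h, h, h, h, h]

lemma ext_add (g g') : ext (g + g') = ext g + ext g' := rfl
lemma ext_sub (g g') : ext (g - g') = ext g - ext g' := rfl

lemma Sm_ext (g) : Sm (ext g) = ext (fun su sc => SB su (g su sc)) := by
  funext y k
  unfold Sm ext
  have e3 : od (rho y 3) = od (y 3) := od_neg _
  have e4 : od (rho y 4) = od (y 4) := rfl
  have ei : idx (rho y) = mkI (od (y 0)) (od (y 2)) (od (y 1)) (xor (ee y) (od (y 2))) := by
    unfold idx
    have h0 : od (rho y 0) = od (y 0) := rfl
    have h1 : od (rho y 1) = od (y 2) := od_neg _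
    have h2 : od (rho y 2) = od (y 1) := rfl
    have h3 : ee (rho y) = xor (ee y) (od (y 2)) := by
      change od (y 0 / 2 + (- y 2) / 2 + y 1 / 2) = xor (od (y 0 / 2 + y 1 / 2 + y 2 / 2)) (od (y 2))
      by_cases h : y 2 % 2 = 1
      · rw [(od_true _).2 h, Bool.xor_true, ← od_succ]
        apply od_congr; omega
      · have : od (y 2) = false := by unfold od; simpa using h
        rw [this, Bool.xor_false]
        apply od_congr; omega
    rw [h0, h1, h2, h3]
  rw [e3, e4, ei]
  unfold SB
  simp only [idx, hb_mk, pb_mk, qb_mk, eb_mk]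
  congr 1
  unfold eps
  rw [sg_od]
  congr 1
  unfold od
  simp

lemma dl3_ext (g) (y) : dl 3 (ext g) y = 0 := by
  unfold dl
  split_ifs with h
  · have : ext g (y + e 3) = ext g (y - e 3) := by
      funext k
      unfold ext idx ee
      simp [e, od_succ, od_pred]
    rw [this, sub_self, smul_zero]
  · rfl
lemma dl4_ext (g) (y) : dl 4 (ext g) y = 0 := by
  unfold dl
  split_ifs with h
  · have : ext g (y + e 4) = ext g (y - e 4) := by
      funext k
      unfold ext idx ee
      simp [e, od_succ, od_pred]
    rw [this, sub_self, smul_zero]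
  · rfl

lemma od_false (a : ℤ) : od a = false ↔ ¬ a % 2 = 1 := by unfold od; simp

lemma ext_a0 (g) (y) (k) (h : y 0 % 2 = 1) : ext g (y + e 0) k =
    g (od (y 3)) (od (y 4)) (mkI false (od (y 1)) (od (y 2)) (!ee y)) := by
  have h1 : ee (y + e 0) = !ee y := by
    unfold ee; rw [← od_succ]; apply od_congr; simp [e]; omega
  have h2 : od (y 0 + 1) = false := (od_false _).2 (by omega)
  unfold ext idx
  rw [h1]
  simp [e, h2]
lemma ext_s0 (g) (y) (k) (h : y 0 % 2 = 1) : ext g (y - e 0) k =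
    g (od (y 3)) (od (y 4)) (mkI false (od (y 1)) (od (y 2)) (ee y)) := by
  have h1 : ee (y - e 0) = ee y := by
    unfold ee; apply od_congr; simp [e]; omega
  have h2 : od (y 0 - 1) = false := (od_false _).2 (by omega)
  unfold ext idx
  rw [h1]
  simp [e, h2]
lemma ext_a1 (g) (y) (k) (h : y 1 % 2 = 1) : ext g (y + e 1) k =
    g (od (y 3)) (od (y 4)) (mkI (od (y 0)) false (od (y 2)) (!ee y)) := by
  have h1 : ee (y + e 1) = !ee y := by
    unfold ee; rw [← od_succ]; apply od_congr; simp [e]; omega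
  have h2 : od (y 1 + 1) = false := (od_false _).2 (by omega)
  unfold ext idx
  rw [h1]
  simp [e, h2]
lemma ext_s1 (g) (y) (k) (h : y 1 % 2 = 1) : ext g (y - e 1) k =
    g (od (y 3)) (od (y 4)) (mkI (od (y 0)) false (od (y 2)) (ee y)) := by
  have h1 : ee (y - e 1) = ee y := by
    unfold ee; apply od_congr; simp [e]; omega
  have h2 : od (y 1 - 1) = false := (od_false _).2 (by omega)
  unfold ext idx
  rw [h1]
  simp [e, h2]
lemma ext_a2 (g) (y) (k) (h : y 2 % 2 = 1) : ext g (y + e 2) k =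
    g (od (y 3)) (od (y 4)) (mkI (od (y 0)) (od (y 1)) false (!ee y)) := by
  have h1 : ee (y + e 2) = !ee y := by
    unfold ee; rw [← od_succ]; apply od_congr; simp [e]; omega
  have h2 : od (y 2 + 1) = false := (od_false _).2 (by omega)
  unfold ext idx
  rw [h1]
  simp [e, h2]
lemma ext_s2 (g) (y) (k) (h : y 2 % 2 = 1) : ext g (y - e 2) k =
    g (od (y 3)) (od (y 4)) (mkI (od (y 0)) (od (y 1)) false (ee y)) := by
  have h1 : ee (y - e 2) = ee y := by
    unfold ee; apply od_congr; simp [e]; omega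
  have h2 : od (y 2 - 1) = false := (od_false _).2 (by omega)
  unfold ext idx
  rw [h1]
  simp [e, h2]

lemma del_ext (g) : del (ext g) = ext (fun su sc => dB (g su sc)) := by
  funext y k
  unfold del
  rw [Fin.sum_univ_five, dl3_ext, dl4_ext, add_zero, add_zero]
  unfold dl
  have hR : ext (fun su sc => dB (g su sc)) y k = dB (g (od (y 3)) (od (y 4))) (idx y) := rfl
  rw [hR]
  unfold dB
  simp only [idx, hb_mk, pb_mk, qb_mk, eb_mk]
  simp only [Pi.add_apply]
  congr 1
  · congr 1
    · by_cases h : y 0 % 2 = 1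
      · rw [if_pos h, if_pos ((od_true _).2 h), sgn0, one_smul, Pi.sub_apply, ext_a0 _ _ _ h, ext_s0 _ _ _ h]
      · rw [if_neg h, if_neg (fun h' => h ((od_true _).1 h'))]; rfl
    · by_cases h : y 1 % 2 = 1
      · rw [if_pos h, if_pos ((od_true _).2 h), sgn1, Pi.smul_apply, Pi.sub_apply, ext_a1 _ _ _ h, ext_s1 _ _ _ h, sg_od]; rfl
      · rw [if_neg h, if_neg (fun h' => h ((od_true _).1 h'))]; rfl
  · by_cases h : y 2 % 2 = 1
    · rw [if_pos h, if_pos ((od_true _).2 h), sgn2, Pi.smul_apply, Pi.sub_apply, ext_a2 _ _ _ h, ext_s2 _ _ _ h, sg_od, sg_od]; rfl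
    · rw [if_neg h, if_neg (fun h' => h ((od_true _).1 h'))]; rfl

lemma dn_ext (n : ℕ) (g) : dn n (ext g) =
    ext (fun su sc => DB su (n + 1 + su.toNat + sc.toNat) (g su sc)) := by
  funext y k
  unfold dn Nm
  rw [oddc_idx]
  simp only [Sm_ext, del_ext]
  have h : ∀ F : Bool → Bool → V, ext F y k = F (od (y 3)) (od (y 4)) (idx y) := fun _ => rfl
  rw [h]
  unfold DB
  have hp : n + 1 + (wt (idx y) + (od (y 3)).toNat + (od (y 4)).toNat) =
    n + 1 + (od (y 3)).toNat + (od (y 4)).toNat + wt (idx y) := by ring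
  rw [hp]
  split_ifs <;> rfl

def rp (su sc : Bool) (i : Fin 16) : Y :=
  ![(hb i).toNat + 2 * (eb i).toNat, (pb i).toNat, (qb i).toNat, su.toNat, sc.toNat]

lemma od_toNat (b : Bool) : od (b.toNat : ℤ) = b := by cases b <;> rfl

lemma idx_rp (su sc i) : idx (rp su sc i) = i := by
  unfold idx ee
  have h0 : rp su sc i 0 = (hb i).toNat + 2 * (eb i).toNat := rfl
  have h1 : rp su sc i 1 = (pb i).toNat := rfl
  have h2 : rp su sc i 2 = (qb i).toNat := rfl
  rw [h0, h1, h2, od_toNat, od_toNat]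
  conv_rhs => rw [← mk_b i]
  congr 1
  · cases hb i <;> cases eb i <;> rfl
  · cases hb i <;> cases eb i <;> cases pb i <;> cases qb i <;> rfl

def res (f : Y → B) : Bool → Bool → V := fun su sc i => f (rp su sc i) 0

lemma res_ext (g) : res (ext g) = g := by
  funext su sc i
  unfold res ext
  rw [idx_rp]
  have h3 : rp su sc i 3 = su.toNat := rfl
  have h4 : rp su sc i 4 = sc.toNat := rfl
  rw [h3, h4, od_toNat, od_toNat]

lemma act_ext (γ : Gam) (g) : actF γ (ext g) = ext g := by
  funext y k
  unfold actF W0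
  generalize (phi (Multiplicative.ofAdd (-k)) γ.left).toAdd = w
  unfold ext idx
  have h : ∀ j, od ((y - (2 : ℤ) • iot w) j) = od (y j) := fun j => od_congr _ _ (par_even _ _ _)
  have he : ee (y - (2 : ℤ) • iot w) = ee y := by
    unfold ee
    apply od_congr
    simp [iot]
    omega
  rw [h, h, h, h, h, he]

lemma tn (a : ℤ) : ((od a).toNat : ℤ) = a % 2 := by
  unfold od
  by_cases h : a % 2 = 1
  · simp [h]
  · have : a % 2 = 0 := by omega
    simp [this]

lemma ext_res (f : Y → B) (hf : ∀ γ, actF γ f = f) : f = ext (res f) := by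
  funext y k
  have h := congrFun (congrFun (hf (gm (y, k))) y) k
  rw [← h]
  unfold actF gm
  simp only [W0_phi, sub_self, toAdd_ofAdd]
  unfold ext res
  congr 1
  unfold W0
  rw [neg_zero, ofAdd_zero, map_one, MulAut.one_apply, toAdd_ofAdd]
  unfold idx
  funext j
  fin_cases j <;> simp [rp, hb_mk, pb_mk, qb_mk, eb_mk, ee, tn, iot, lam] <;> omega

end CubeRes

namespace CubeRes
open CategoryTheory

def SBl (s : Bool) : V →ₗ[ℤ] V where
  toFun := SB s
  map_add' x y := by funext i; simp only [SB, Pi.add_apply]; ring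
  map_smul' c x := by funext i; simp only [SB, Pi.smul_apply, smul_eq_mul, RingHom.id_apply]; ring

def dBl : V →ₗ[ℤ] V where
  toFun := dB
  map_add' x y := by
    funext i; simp only [dB, Pi.add_apply]; split_ifs <;> ring
  map_smul' c x := by
    funext i; simp only [dB, Pi.smul_apply, smul_eq_mul, RingHom.id_apply]; split_ifs <;> ring

def DBl (s : Bool) (t : ℕ) : V →ₗ[ℤ] V where
  toFun := DB s t
  map_add' x y := by
    funext i
    have h1 : ∀ x y, SB s (x + y) = SB s x + SB s y := map_add (SBl s)
    have h2 : ∀ x y, dB (x + y) = dB x + dB y := map_add dBl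
    simp only [DB, h1, h2, Pi.add_apply]; split_ifs <;> ring
  map_smul' c x := by
    funext i
    have h1 : ∀ (c : ℤ) x, SB s (c • x) = c • SB s x := map_smul (SBl s)
    have h2 : ∀ (c : ℤ) x, dB (c • x) = c • dB x := map_smul dBl
    simp only [DB, h1, h2, Pi.smul_apply, smul_eq_mul, RingHom.id_apply]; split_ifs <;> ring

lemma DBl_apply (s t x) : DBl s t x = DB s t x := rfl

lemma DB_mod (s t x) : DB s t x = DB s (t % 2) x := by
  funext i
  unfold DB
  have : (t % 2 + wt i) % 2 = (t + wt i) % 2 := by omega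
  rw [this]

/-- component cohomology statement -/
def Good (s : Bool) (t rK rJ : ℕ) (T : Type) [AddCommGroup T] : Prop :=
  ∃ ψ : V →+ T,
    (∀ τ, ∃ x, (∀ i, rK ≤ wt i → x i = 0) ∧ DB s (t + 1) x = 0 ∧ ψ x = τ) ∧
    (∀ x, (∀ i, rK ≤ wt i → x i = 0) → DB s (t + 1) x = 0 →
      (ψ x = 0 ↔ ∃ y, (∀ i, rJ ≤ wt i → y i = 0) ∧ DB s t y = x))

lemma wt_lt (i) : wt i < 4 := by revert i; decide

lemma Good.congr {s t rK rJ} {T : Type} [AddCommGroup T] (h : Good s (t % 2) (min rK 4) (min rJ 4) T) :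
    Good s t rK rJ T := by
  obtain ⟨ψ, h1, h2⟩ := h
  have hK : ∀ r i, r ≤ wt i ↔ min r 4 ≤ wt i := fun r i => by
    have := wt_lt i
    omega
  have e1 : ∀ x, DB s (t + 1) x = DB s (t % 2 + 1) x := fun x => by
    rw [DB_mod s (t + 1), DB_mod s (t % 2 + 1)]
    congr 1; omega
  have e2 : ∀ x, DB s t x = DB s (t % 2) x := fun x => DB_mod s t x
  refine ⟨ψ, ?_, ?_⟩
  · intro τ
    obtain ⟨x, a, b, c⟩ := h1 τ
    exact ⟨x, fun i hi => a i ((hK _ _).1 hi), (e1 x).trans b, c⟩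
  · intro x hx hd
    rw [h2 x (fun i hi => hx i ((hK _ _).2 hi)) ((e1 x).symm.trans hd)]
    constructor
    · rintro ⟨y, a, b⟩
      exact ⟨y, fun i hi => a i ((hK _ _).1 hi), (e2 y).trans b⟩
    · rintro ⟨y, a, b⟩
      exact ⟨y, fun i hi => a i ((hK _ _).2 hi), (e2 y).symm.trans b⟩

theorem coh_of_good (n : ℕ) {T0 T1 T2 T3 : Type} [AddCommGroup T0] [AddCommGroup T1]
    [AddCommGroup T2] [AddCommGroup T3]
    (G0 : Good false (n + 1) (n + 2) (n + 1) T0)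
    (G1 : Good false (n + 2) (n + 1) n T1)
    (G2 : Good true (n + 2) (n + 1) n T2)
    (G3 : Good true (n + 3) n (n - 1) T3) :
    Nonempty (H (n + 1) ≃+ T0 × T1 × T2 × T3) := by
  obtain ⟨p0, s0, k0⟩ := G0
  obtain ⟨p1, s1, k1⟩ := G1
  obtain ⟨p2, s2, k2⟩ := G2
  obtain ⟨p3, s3, k3⟩ := G3
  let ψ : (Y → B) →+ T0 × T1 × T2 × T3 := AddMonoidHom.mk'
    (fun f => (p0 (res f false false), p1 (res f false true), p2 (res f true false), p3 (res f true true)))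
    (fun f g => by
      have h : ∀ a b, res (f + g) a b = res f a b + res g a b := fun _ _ => rfl
      simp only [h, map_add]; rfl)
  have hd : ∀ m g, dn m (ext g) = 0 ↔ ∀ a b, DB a (m + 1 + a.toNat + b.toNat) (g a b) = 0 := by
    intro m g
    rw [dn_ext]
    constructor
    · intro h a b
      have h1 := congrArg res h
      rw [res_ext] at h1
      exact congrFun (congrFun h1 a) b
    · intro h
      have : (fun su sc => DB su (m + 1 + su.toNat + sc.toNat) (g su sc)) = fun _ _ => 0 := by
        funext a b; exact h a b
      rw [this]; rfl
  have hsu : ∀ m g, Supp m (ext g) ↔ ∀ a b i, m < wt i + a.toNat + b.toNat → g a b i = 0 := by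
    intro m g
    constructor
    · intro h a b i hi
      have h3 : rp a b i 3 = a.toNat := rfl
      have h4 : rp a b i 4 = b.toNat := rfl
      have h1 := congrFun (h (rp a b i) (by rw [oddc_idx, idx_rp, h3, h4, od_toNat, od_toNat]; exact hi)) 0
      have h2 : ext g (rp a b i) 0 = res (ext g) a b i := rfl
      rw [h2, res_ext] at h1
      exact h1
    · intro h y hy
      funext k
      exact h _ _ _ (by rw [oddc_idx] at hy; exact hy)
  let mk4 : V → V → V → V → Bool → Bool → V := fun a b c d =>
    fun u v => match u, v with
      | false, false => a
      | false, true => b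
      | true, false => c
      | true, true => d
  refine coh_main n ψ ?_ ?_
  · rintro ⟨t0, t1, t2, t3⟩
    obtain ⟨x0, a0, b0, c0⟩ := s0 t0
    obtain ⟨x1, a1, b1, c1⟩ := s1 t1
    obtain ⟨x2, a2, b2, c2⟩ := s2 t2
    obtain ⟨x3, a3, b3, c3⟩ := s3 t3
    refine ⟨ext (mk4 x0 x1 x2 x3), fun γ => act_ext γ _, ?_, ?_, ?_⟩
    · rw [hsu]
      intro a b i hi
      cases a <;> cases b
      · exact a0 i (by simp at hi; omega)
      · exact a1 i (by simp at hi; omega)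
      · exact a2 i (by simp at hi; omega)
      · exact a3 i (by simp at hi; omega)
    · rw [hd]
      intro a b
      cases a <;> cases b
      · exact b0
      · exact b1
      · exact b2
      · exact b3
    · change (p0 (res (ext (mk4 x0 x1 x2 x3)) false false), p1 (res (ext (mk4 x0 x1 x2 x3)) false true),
        p2 (res (ext (mk4 x0 x1 x2 x3)) true false), p3 (res (ext (mk4 x0 x1 x2 x3)) true true)) = _
      rw [res_ext]
      exact Prod.ext c0 (Prod.ext c1 (Prod.ext c2 c3))
  · intro f hf hS hD
    have hfe := ext_res f hf
    obtain ⟨g, hg⟩ : ∃ g, f = ext g := ⟨_, hfe⟩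
    clear hfe
    subst hg
    have hψ : ψ (ext g) = (p0 (g false false), p1 (g false true), p2 (g true false), p3 (g true true)) := by
      change (p0 (res (ext g) false false), p1 (res (ext g) false true),
        p2 (res (ext g) true false), p3 (res (ext g) true true)) = _
      rw [res_ext]
    rw [hψ]
    rw [hsu] at hS
    rw [hd] at hD
    have K0 := k0 (g false false) (fun i hi => hS _ _ i (by simp; omega)) (hD false false)
    have K1 := k1 (g false true) (fun i hi => hS _ _ i (by simp; omega)) (hD false true)
    have K2 := k2 (g true false) (fun i hi => hS _ _ i (by simp; omega)) (hD true false)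
    have K3 := k3 (g true true) (fun i hi => hS _ _ i (by simp; omega)) (hD true true)
    rw [Prod.ext_iff, Prod.ext_iff, Prod.ext_iff]
    change (p0 _ = 0 ∧ p1 _ = 0 ∧ p2 _ = 0 ∧ p3 _ = 0) ↔ _
    rw [K0, K1, K2, K3]
    constructor
    · rintro ⟨⟨y0, a0, b0⟩, ⟨y1, a1, b1⟩, ⟨y2, a2, b2⟩, ⟨y3, a3, b3⟩⟩
      refine ⟨ext (mk4 y0 y1 y2 y3), fun γ => act_ext γ _, ?_, ?_⟩
      · rw [hsu]
        intro a b i hi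
        cases a <;> cases b
        · exact a0 i (by simp at hi; omega)
        · exact a1 i (by simp at hi; omega)
        · exact a2 i (by simp at hi; omega)
        · exact a3 i (by simp at hi; omega)
      · rw [dn_ext]
        congr 1
        funext a b
        cases a <;> cases b
        · exact b0
        · exact b1
        · exact b2
        · exact b3
    · rintro ⟨y, hy, hyS, hyD⟩
      have hye := ext_res y hy
      obtain ⟨z, hz⟩ : ∃ z, y = ext z := ⟨_, hye⟩
      clear hye
      subst hz
      rw [hsu] at hyS
      rw [dn_ext] at hyD
      have hyD' := congrArg res hyD
      rw [res_ext, res_ext] at hyD'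
      have hc := fun a b => congrFun (congrFun hyD' a) b
      exact ⟨⟨z false false, fun i hi => hyS _ _ i (by simp; omega), hc false false⟩,
        ⟨z false true, fun i hi => hyS _ _ i (by simp; omega), hc false true⟩,
        ⟨z true false, fun i hi => hyS _ _ i (by simp; omega), hc true false⟩,
        ⟨z true true, fun i hi => hyS _ _ i (by simp; omega), hc true true⟩⟩

end CubeRes

namespace CubeRes
open CategoryTheory

/-- sparse vector -/
def lk : List (Fin 16 × ℤ) → V
  | [] => fun _ => 0
  | (a, v) :: l => fun i => if a = i then v + lk l i else lk l i

/-- sparse functional -/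
def dotS : List (Fin 16 × ℤ) → V → ℤ
  | [] => fun _ => 0
  | (a, v) :: l => fun x => v * x a + dotS l x

/-- sparse matrix -/
def mulM : List (Fin 16 × Fin 16 × ℤ) → V → V
  | [] => fun _ _ => 0
  | (r, c, v) :: l => fun x i => if r = i then v * x c + mulM l x i else mulM l x i

def dotL (l : List (Fin 16 × ℤ)) : V →ₗ[ℤ] ℤ where
  toFun := dotS l
  map_add' x y := by
    induction l with
    | nil => rfl
    | cons a l ih => simp only [dotS, ih, Pi.add_apply]; ring
  map_smul' c x := by
    induction l with
    | nil => simp [dotS]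
    | cons a l ih =>
      simp only [dotS, Pi.smul_apply, smul_eq_mul, RingHom.id_apply] at ih ⊢
      rw [ih]; ring

def mulL (l : List (Fin 16 × Fin 16 × ℤ)) : V →ₗ[ℤ] V where
  toFun := mulM l
  map_add' x y := by
    funext i
    induction l with
    | nil => rfl
    | cons a l ih =>
      simp only [mulM, Pi.add_apply] at ih ⊢
      rw [ih]; split_ifs <;> ring
  map_smul' c x := by
    funext i
    induction l with
    | nil => simp [mulM]
    | cons a l ih =>
      simp only [mulM, Pi.smul_apply, smul_eq_mul, RingHom.id_apply] at ih ⊢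
      rw [ih]; split_ifs <;> ring

def bas (j : Fin 16) : V := fun i => if j = i then 1 else 0

lemma bas_sum (x : V) : x = ∑ j, x j • bas j := by
  funext i
  rw [Finset.sum_apply]
  simp [bas]

lemma lin_sum {M : Type} [AddCommGroup M] [Module ℤ M] (f : V →ₗ[ℤ] M) (x : V) : f x = ∑ j, x j • f (bas j) := by
  conv_lhs => rw [bas_sum x, map_sum]
  exact Finset.sum_congr rfl fun j _ => map_zsmul f.toAddMonoidHom _ _

structure Cert where
  s1 : List (Fin 16 × ℤ)
  s2 : List (Fin 16 × ℤ)
  t1 : List (Fin 16 × ℤ)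
  t2 : List (Fin 16 × ℤ)
  p1 : List (Fin 16 × ℤ)
  p2 : List (Fin 16 × ℤ)
  h : List (Fin 16 × Fin 16 × ℤ)
  k : List (Fin 16 × Fin 16 × ℤ)

def msk (r : ℕ) (x : V) : V := fun i => if wt i < r then x i else 0

def mskL (r : ℕ) : V →ₗ[ℤ] V where
  toFun := msk r
  map_add' x y := by funext i; simp only [msk, Pi.add_apply]; split_ifs <;> ring
  map_smul' c x := by
    funext i; simp only [msk, Pi.smul_apply, smul_eq_mul, RingHom.id_apply]; split_ifs <;> ring

def okC (s : Bool) (t rK rJ : ℕ) (a b : ℕ) (C : Cert) : Prop :=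
  (∀ i, rK ≤ wt i → lk C.s1 i = 0 ∧ lk C.s2 i = 0) ∧
  (∀ i, DB s (t + 1) (lk C.s1) i = 0 ∧ DB s (t + 1) (lk C.s2) i = 0) ∧
  (∀ i, a * lk C.s1 i = DB s t (msk rJ (lk C.t1)) i ∧ b * lk C.s2 i = DB s t (msk rJ (lk C.t2)) i) ∧
  (∀ j, wt j < rJ → (a : ℤ) ∣ dotS C.p1 (DB s t (bas j)) ∧ (b : ℤ) ∣ dotS C.p2 (DB s t (bas j))) ∧
  ((a : ℤ) ∣ dotS C.p1 (lk C.s1) - 1 ∧ (a : ℤ) ∣ dotS C.p1 (lk C.s2) ∧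
    (b : ℤ) ∣ dotS C.p2 (lk C.s1) ∧ (b : ℤ) ∣ dotS C.p2 (lk C.s2) - 1) ∧
  (∀ j, wt j < rK → ∀ i, 4 * (bas j i - DB s t (msk rJ (mulM C.h (bas j))) i -
    dotS C.p1 (bas j) * lk C.s1 i - dotS C.p2 (bas j) * lk C.s2 i) = mulM C.k (DB s (t + 1) (bas j)) i)

instance (s t rK rJ a b C) : Decidable (okC s t rK rJ a b C) := by unfold okC; infer_instance

theorem good_of_cert (s : Bool) (t rK rJ a b : ℕ) (C : Cert) (hC : okC s t rK rJ a b C) :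
    Good s t rK rJ (ZMod a × ZMod b) := by
  obtain ⟨h1, h2, h3, h4, ⟨h5, h6, h7, h8⟩, h9⟩ := hC
  let A := DBl s (t + 1)
  let D := DBl s t
  have mskS : ∀ x i, rJ ≤ wt i → msk rJ x i = 0 := fun x i hi => if_neg (not_lt.2 hi)
  have hx : ∀ x, (∀ i, rK ≤ wt i → x i = 0) → DB s (t + 1) x = 0 →
      x = DB s t (msk rJ (mulM C.h x)) + dotS C.p1 x • lk C.s1 + dotS C.p2 x • lk C.s2 := by
    intro x hK hA
    let E : V →ₗ[ℤ] V := (4 : ℤ) • (LinearMap.id - D.comp ((mskL rJ).comp (mulL C.h)) -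
      (LinearMap.toSpanSingleton ℤ V (lk C.s1)).comp (dotL C.p1) -
      (LinearMap.toSpanSingleton ℤ V (lk C.s2)).comp (dotL C.p2)) - (mulL C.k).comp A
    have hE : ∀ x, E x = (4 : ℤ) • (x - DB s t (msk rJ (mulM C.h x)) - dotS C.p1 x • lk C.s1 -
      dotS C.p2 x • lk C.s2) - mulM C.k (DB s (t + 1) x) := fun x => rfl
    have hE0 : E x = 0 := by
      rw [lin_sum]
      refine Finset.sum_eq_zero fun j _ => ?_
      by_cases hj : wt j < rK
      · have : E (bas j) = 0 := by
          funext i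
          rw [hE]
          simp only [Pi.sub_apply, Pi.smul_apply, smul_eq_mul]
          rw [← h9 j hj i]
          simp
        rw [this, smul_zero]
      · rw [hK j (by omega), zero_smul]
    rw [hE, hA] at hE0
    have hm : mulM C.k 0 = 0 := map_zero (mulL C.k)
    rw [hm, sub_zero] at hE0
    funext i
    have := congrFun hE0 i
    simp only [Pi.sub_apply, Pi.smul_apply, smul_eq_mul, Pi.zero_apply, Pi.add_apply] at this ⊢
    linarith
  have hdiv : ∀ (m : ℕ) (p : List (Fin 16 × ℤ)), (∀ j, wt j < rJ → (m : ℤ) ∣ dotS p (DB s t (bas j))) →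
      ∀ y, (∀ i, rJ ≤ wt i → y i = 0) → (m : ℤ) ∣ dotS p (DB s t y) := by
    intro m p hp y hy
    have : dotS p (DB s t y) = ((dotL p).comp D) y := rfl
    rw [this, lin_sum]
    refine Finset.dvd_sum fun j _ => ?_
    by_cases hj : wt j < rJ
    · exact Dvd.dvd.mul_left (hp j hj) _
    · rw [hy j (by omega), zero_smul]; exact dvd_zero _
  have e1 : (a : ℤ) • lk C.s1 = D (msk rJ (lk C.t1)) := funext fun i => (h3 i).1
  have e2 : (b : ℤ) • lk C.s2 = D (msk rJ (lk C.t2)) := funext fun i => (h3 i).2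
  let ψ : V →+ ZMod a × ZMod b :=
    ((Int.castAddHom (ZMod a)).comp (dotL C.p1).toAddMonoidHom).prod
      ((Int.castAddHom (ZMod b)).comp (dotL C.p2).toAddMonoidHom)
  have hψ : ∀ x, ψ x = ((dotS C.p1 x : ZMod a), (dotS C.p2 x : ZMod b)) := fun x => rfl
  refine ⟨ψ, ?_, ?_⟩
  · rintro ⟨u, v⟩
    obtain ⟨u', rfl⟩ := ZMod.intCast_surjective u
    obtain ⟨v', rfl⟩ := ZMod.intCast_surjective v
    refine ⟨u' • lk C.s1 + v' • lk C.s2, ?_, ?_, ?_⟩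
    · intro i hi
      simp [h1 i hi]
    · have : A (u' • lk C.s1 + v' • lk C.s2) = 0 := by
        have a1 : A (lk C.s1) = 0 := funext fun i => (h2 i).1
        have a2 : A (lk C.s2) = 0 := funext fun i => (h2 i).2
        rw [map_add, map_smul, map_smul, a1, a2, smul_zero, smul_zero, add_zero]
      exact this
    · rw [hψ]
      have q : ∀ p, dotS p (u' • lk C.s1 + v' • lk C.s2) = u' * dotS p (lk C.s1) + v' * dotS p (lk C.s2) := by
        intro p
        change dotL p _ = u' * dotL p _ + v' * dotL p _
        rw [map_add, map_smul, map_smul]; rfl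
      rw [q, q]
      refine Prod.ext ?_ ?_
      · change ((_ : ℤ) : ZMod a) = (u' : ZMod a)
        rw [ZMod.intCast_eq_intCast_iff_dvd_sub]
        have := (h5.mul_left u').add (h6.mul_left v')
        rw [← dvd_neg]
        convert this using 1; ring
      · change ((_ : ℤ) : ZMod b) = (v' : ZMod b)
        rw [ZMod.intCast_eq_intCast_iff_dvd_sub]
        have := (h7.mul_left u').add (h8.mul_left v')
        rw [← dvd_neg]
        convert this using 1; ring
  · intro x hK hA
    rw [hψ, Prod.ext_iff]
    change ((dotS C.p1 x : ℤ) : ZMod a) = 0 ∧ ((dotS C.p2 x : ℤ) : ZMod b) = 0 ↔ _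
    rw [ZMod.intCast_zmod_eq_zero_iff_dvd, ZMod.intCast_zmod_eq_zero_iff_dvd]
    constructor
    · rintro ⟨⟨u, hu⟩, ⟨v, hv⟩⟩
      refine ⟨msk rJ (mulM C.h x) + u • msk rJ (lk C.t1) + v • msk rJ (lk C.t2), ?_, ?_⟩
      · intro i hi
        simp [mskS _ i hi]
      · conv_rhs => rw [hx x hK hA, hu, hv]
        change D _ = D _ + _ + _
        rw [map_add, map_add, map_smul, map_smul, ← e1, ← e2, smul_smul, smul_smul, mul_comm u, mul_comm v]
    · rintro ⟨y, hy, rfl⟩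
      exact ⟨hdiv a _ (fun j hj => (h4 j hj).1) y hy, hdiv b _ (fun j hj => (h4 j hj).2) y hy⟩

end CubeRes

namespace CubeRes

def certP0 : Cert where
  s1 := [(0, 1), (1, 1)]
  s2 := []
  t1 := []
  t2 := []
  p1 := [(1, 1)]
  p2 := []
  h := []
  k := [(0, 2, -4)]

theorem goodP0 : Good false 0 1 0 (ZMod 0 × ZMod 1) :=
  good_of_cert _ _ _ _ _ _ certP0 (by decide +kernel)

def certP1 : Cert where
  s1 := [(8, 1), (9, 1)]
  s2 := []
  t1 := []
  t2 := []
  p1 := [(2, 1), (9, 1)]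
  p2 := []
  h := [(0, 2, -1)]
  k := [(0, 1, 1), (0, 8, 4), (1, 1, 1), (3, 3, -4), (3, 4, 4), (3, 8, -8), (4, 4, -4), (4, 8, 4), (5, 2, -4), (5, 8, 4), (8, 3, 4), (8, 4, -4), (8, 8, 8), (8, 10, 4)]

theorem goodP1 : Good false 1 2 1 (ZMod 0 × ZMod 1) :=
  good_of_cert _ _ _ _ _ _ certP1 (by decide +kernel)

def certP2 : Cert where
  s1 := [(6, 1), (7, 1)]
  s2 := [(0, 1), (1, 1)]
  t1 := []
  t2 := [(0, 1), (1, 1)]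
  p1 := [(2, -1), (3, 1), (6, 1), (8, 2)]
  p2 := [(0, 1), (8, -4)]
  h := [(0, 8, 1), (2, 2, -1), (2, 8, 1), (3, 2, 1), (3, 3, -1), (3, 4, 1), (3, 8, -3), (4, 2, -1), (4, 4, -1), (4, 8, 2), (8, 2, -2), (8, 3, 1), (8, 4, -1), (8, 8, 4), (8, 10, 1)]
  k := [(1, 8, 4), (5, 2, -4), (5, 8, 4), (7, 2, 4), (7, 6, 4), (7, 8, -4), (9, 2, -2), (9, 6, -2), (9, 8, 2), (9, 10, 2), (9, 11, -2), (9, 14, 2), (11, 6, 4), (11, 10, -4), (11, 12, 4), (11, 14, -4), (12, 2, 2), (12, 6, -2), (12, 8, -2), (12, 10, 2), (12, 11, -2), (12, 12, -4), (12, 14, 2), (13, 2, -2), (13, 6, -2), (13, 8, 2), (13, 10, -2), (13, 11, -2), (13, 14, 2)]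

theorem goodP2 : Good false 0 3 2 (ZMod 0 × ZMod 4) :=
  good_of_cert _ _ _ _ _ _ certP2 (by decide +kernel)

def certP3 : Cert where
  s1 := [(9, 1), (12, 1), (15, -1)]
  s2 := [(9, 2), (12, 2), (14, 1), (15, -1)]
  t1 := []
  t2 := [(0, 4), (5, -4), (6, -4), (8, 1), (10, 1), (11, 1), (13, -2)]
  p1 := [(6, 2), (10, -1), (11, 1), (12, 1), (13, -1), (14, -2)]
  p2 := [(5, 1), (6, -1), (8, 1), (10, 1), (11, -1), (14, 1)]
  h := [(0, 8, -1), (5, 5, 1), (5, 8, 1), (6, 5, 1), (6, 6, -1), (6, 8, 1), (10, 5, -1), (10, 8, -1), (10, 10, -1), (10, 11, 1), (10, 13, 1), (11, 11, -1), (13, 5, 1), (13, 8, 1), (13, 11, -1), (13, 13, -1)]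
  k := [(0, 1, 1), (0, 8, 4), (1, 1, 1), (2, 3, -4), (2, 4, 4), (2, 5, -4), (2, 8, -12), (3, 5, 4), (3, 8, 4), (4, 3, -4), (4, 5, -4), (4, 8, -8), (7, 4, 2), (7, 5, -2), (7, 6, 2), (7, 8, -4), (9, 3, 4), (9, 5, 4), (9, 8, 8), (9, 12, -4), (15, 4, 2), (15, 5, -2), (15, 6, 2), (15, 8, -4), (15, 14, 4)]

theorem goodP3 : Good false 1 4 3 (ZMod 0 × ZMod 2) :=
  good_of_cert _ _ _ _ _ _ certP3 (by decide +kernel)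

def certP4 : Cert where
  s1 := [(0, 1), (1, 1)]
  s2 := [(6, 1), (7, 1)]
  t1 := [(0, 1), (1, 1)]
  t2 := [(6, 1), (14, 1)]
  p1 := [(0, 1), (8, -4)]
  p2 := [(2, -1), (3, 1), (6, 1), (8, 2)]
  h := [(0, 8, 1), (2, 2, -1), (2, 8, 1), (3, 2, 1), (3, 3, -1), (3, 4, 1), (3, 8, -3), (4, 2, -1), (4, 4, -1), (4, 8, 2), (8, 2, -2), (8, 3, 1), (8, 4, -1), (8, 8, 4), (8, 10, 1), (14, 14, -1)]
  k := [(1, 8, 4), (5, 2, -4), (5, 8, 4), (7, 2, 4), (7, 6, 4), (7, 8, -4), (9, 8, 1), (9, 9, 1), (11, 2, -4), (11, 8, 2), (11, 9, -2), (11, 11, -4), (11, 12, 4), (12, 2, 4), (12, 8, -3), (12, 9, 1), (12, 12, -4), (13, 8, 1), (13, 9, 1), (13, 10, -4), (15, 2, -2), (15, 6, -2), (15, 8, 1), (15, 9, -1), (15, 10, 2), (15, 11, -2), (15, 14, 2)]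

theorem goodP4 : Good false 0 4 4 (ZMod 4 × ZMod 2) :=
  good_of_cert _ _ _ _ _ _ certP4 (by decide +kernel)

def certP5 : Cert where
  s1 := [(9, 1), (12, 1), (15, -1)]
  s2 := [(14, 1), (15, 1)]
  t1 := [(0, 4), (5, -4), (6, -4), (8, 1), (10, 1), (11, 1), (13, -2), (14, -1)]
  t2 := [(14, 1)]
  p1 := [(8, 1), (9, 1)]
  p2 := [(5, 1), (6, -1), (8, 1), (10, 1), (11, -1), (14, 1)]
  h := [(0, 8, -1), (5, 5, 1), (5, 8, 1), (6, 5, 1), (6, 6, -1), (6, 8, 1), (10, 5, -1), (10, 8, -1), (10, 10, -1), (10, 11, 1), (10, 13, 1), (11, 11, -1), (13, 5, 1), (13, 8, 1), (13, 11, -1), (13, 13, -1)]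
  k := [(0, 1, 1), (0, 8, 4), (1, 1, 1), (2, 3, -4), (2, 4, 4), (2, 5, -4), (2, 8, -12), (3, 5, 4), (3, 8, 4), (4, 3, -4), (4, 5, -4), (4, 8, -8), (7, 4, 2), (7, 5, -2), (7, 6, 2), (7, 8, -4), (12, 3, -4), (12, 5, -4), (12, 8, -8), (12, 12, 4), (15, 3, 4), (15, 4, 2), (15, 5, 2), (15, 6, 2), (15, 8, 4), (15, 12, -4), (15, 14, 4)]

theorem goodP5 : Good false 1 4 4 (ZMod 4 × ZMod 2) :=
  good_of_cert _ _ _ _ _ _ certP5 (by decide +kernel)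

def certN0 : Cert where
  s1 := []
  s2 := []
  t1 := []
  t2 := []
  p1 := []
  p2 := []
  h := []
  k := [(0, 1, -2), (0, 2, -4), (1, 1, -2)]

theorem goodN0 : Good true 0 1 0 (ZMod 1 × ZMod 1) :=
  good_of_cert _ _ _ _ _ _ certN0 (by decide +kernel)

def certN1 : Cert where
  s1 := [(0, 1), (1, 1)]
  s2 := []
  t1 := [(0, -1), (1, -1)]
  t2 := []
  p1 := [(1, 1)]
  p2 := []
  h := [(0, 2, -1)]
  k := [(0, 2, 6), (0, 3, -2), (0, 5, 4), (0, 6, 2), (3, 2, -4), (3, 5, -4), (4, 2, 2), (4, 3, 2), (4, 6, 2), (5, 2, -2), (5, 3, 2), (5, 5, -4), (5, 6, -2), (8, 2, 3), (8, 3, -1), (8, 5, 2), (8, 6, 1), (8, 8, -2), (9, 2, -1), (9, 3, -1), (9, 5, -2), (9, 6, 1), (9, 8, -2), (9, 10, -4)]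

theorem goodN1 : Good true 1 2 1 (ZMod 2 × ZMod 1) :=
  good_of_cert _ _ _ _ _ _ certN1 (by decide +kernel)

def certN2 : Cert where
  s1 := [(6, 1), (7, -1), (9, 1), (10, 1), (11, -1)]
  s2 := []
  t1 := [(2, -1), (3, 1), (4, 1), (5, -1), (9, -2)]
  t2 := []
  p1 := [(2, -2), (4, 1), (5, 1), (6, 1), (8, 2)]
  p2 := []
  h := [(0, 8, 1), (2, 2, -1), (2, 8, 1), (3, 5, -1), (3, 8, -1), (4, 2, 1), (4, 4, -1), (9, 2, -1), (9, 4, 1), (9, 12, -1)]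
  k := [(0, 0, -2), (1, 0, -2), (1, 8, 4), (3, 5, -4), (3, 8, -4), (7, 5, 4), (7, 6, -4), (7, 8, 4), (9, 5, -2), (9, 6, 2), (9, 8, -2), (9, 10, -2), (9, 11, -2), (9, 12, 4), (9, 14, 2), (10, 5, -2), (10, 6, 2), (10, 8, -2), (10, 10, -2), (10, 11, -2), (10, 14, 2), (11, 5, -2), (11, 6, -2), (11, 8, -2), (11, 10, 2), (11, 11, -2), (11, 12, -4), (11, 14, -2), (13, 5, -4), (13, 8, -4), (13, 10, 4), (13, 12, -4)]

theorem goodN2 : Good true 0 3 2 (ZMod 4 × ZMod 1) :=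
  good_of_cert _ _ _ _ _ _ certN2 (by decide +kernel)

def certN3 : Cert where
  s1 := [(0, 1), (1, 1)]
  s2 := [(14, 1), (15, -1)]
  t1 := [(0, -1), (1, -1)]
  t2 := [(6, -1), (7, 1)]
  p1 := [(1, 1)]
  p2 := [(5, 1), (6, -1), (8, 1), (10, 1), (11, 1), (14, 1)]
  h := [(0, 8, -1), (5, 5, 1), (5, 8, 1), (6, 5, 1), (6, 6, -1), (6, 8, 1), (8, 5, 1), (8, 8, 1), (8, 10, -1), (8, 11, 1), (8, 12, 1), (10, 5, -1), (10, 8, -1), (10, 11, -1), (10, 12, -1), (12, 5, -1), (12, 8, -1), (12, 10, 1), (12, 12, -1)]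
  k := [(0, 8, 4), (2, 2, -4), (2, 8, 4), (3, 2, 4), (3, 3, -4), (3, 4, -4), (3, 8, -4), (4, 2, 4), (4, 4, -4), (7, 2, 6), (7, 3, -2), (7, 4, -4), (7, 6, -2), (7, 8, -4), (9, 8, -2), (9, 9, -2), (13, 2, -8), (13, 3, 4), (13, 4, 4), (13, 8, 6), (13, 9, -2), (13, 10, 4), (15, 2, 2), (15, 3, -2), (15, 6, 2), (15, 8, -2), (15, 9, 2), (15, 10, -4), (15, 14, -4)]

theorem goodN3 : Good true 1 4 3 (ZMod 2 × ZMod 2) :=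
  good_of_cert _ _ _ _ _ _ certN3 (by decide +kernel)

def certN4 : Cert where
  s1 := [(6, 1), (7, -1), (15, -1)]
  s2 := [(9, 1), (12, 1), (13, -1), (15, -1)]
  t1 := [(6, 1), (14, 1)]
  t2 := [(9, -1), (10, -1), (14, 1)]
  p1 := [(2, -3), (3, 1), (4, 2), (6, 1), (8, 2)]
  p2 := [(2, 4), (3, -2), (4, -2), (8, -3), (9, 1), (10, -2)]
  h := [(1, 8, -1), (2, 2, -1), (2, 8, 1), (3, 2, 1), (3, 3, -1), (3, 4, -1), (3, 8, -1), (4, 2, 1), (4, 4, -1), (9, 2, 2), (9, 3, -1), (9, 4, -1), (9, 8, -2), (9, 10, -1), (14, 14, -1)]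
  k := [(0, 1, -2), (0, 8, -4), (1, 1, -2), (5, 5, 4), (5, 8, 4), (7, 5, 4), (7, 6, -4), (7, 8, 4), (11, 5, -4), (11, 8, -4), (11, 11, -4), (11, 12, -4), (12, 5, -4), (12, 8, -4), (12, 12, -4), (13, 10, 4), (15, 5, 6), (15, 6, -2), (15, 8, 6), (15, 10, 2), (15, 11, 2), (15, 12, 4), (15, 14, -2)]

theorem goodN4 : Good true 0 4 4 (ZMod 2 × ZMod 2) :=
  good_of_cert _ _ _ _ _ _ certN4 (by decide +kernel)

def certN5 : Cert where
  s1 := [(0, 1), (1, 1)]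
  s2 := [(14, 1), (15, -1)]
  t1 := [(0, -1), (1, -1)]
  t2 := [(6, -1), (7, 1)]
  p1 := [(1, 1)]
  p2 := [(5, 1), (6, -1), (8, 1), (10, 1), (11, 1), (14, 1)]
  h := [(0, 8, -1), (5, 5, 1), (5, 8, 1), (6, 5, 1), (6, 6, -1), (6, 8, 1), (8, 5, 1), (8, 8, 1), (8, 10, -1), (8, 11, 1), (8, 12, 1), (10, 5, -1), (10, 8, -1), (10, 11, -1), (10, 12, -1), (12, 5, -1), (12, 8, -1), (12, 10, 1), (12, 12, -1)]
  k := [(0, 8, 4), (2, 2, -4), (2, 8, 4), (3, 2, 4), (3, 3, -4), (3, 4, -4), (3, 8, -4), (4, 2, 4), (4, 4, -4), (7, 2, 6), (7, 3, -2), (7, 4, -4), (7, 6, -2), (7, 8, -4), (9, 8, -2), (9, 9, -2), (13, 2, -8), (13, 3, 4), (13, 4, 4), (13, 8, 6), (13, 9, -2), (13, 10, 4), (15, 2, 2), (15, 3, -2), (15, 6, 2), (15, 8, -2), (15, 9, 2), (15, 10, -4), (15, 14, -4)]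

theorem goodN5 : Good true 1 4 4 (ZMod 2 × ZMod 2) :=
  good_of_cert _ _ _ _ _ _ certN5 (by decide +kernel)

def certNz : Cert where
  s1 := []
  s2 := []
  t1 := []
  t2 := []
  p1 := []
  p2 := []
  h := []
  k := []

theorem goodNz : Good true 1 0 0 (ZMod 1 × ZMod 1) :=
  good_of_cert _ _ _ _ _ _ certNz (by decide +kernel)

end CubeRes

namespace CubeRes

def eH1 : ((ZMod 0 × ZMod 1) × (ZMod 0 × ZMod 1) × (ZMod 1 × ZMod 1) × (ZMod 1 × ZMod 1)) ≃+ (Fin 2 → ℤ) where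
  toFun x := ![x.1.1, x.2.1.1]
  invFun y := ((y 0, 0), (y 1, 0), (0, 0), (0, 0))
  left_inv x := Prod.ext (Prod.ext rfl (Subsingleton.elim _ _))
    (Prod.ext (Prod.ext rfl (Subsingleton.elim _ _)) (Subsingleton.elim _ _))
  right_inv y := by funext i; fin_cases i <;> rfl
  map_add' x y := by funext i; fin_cases i <;> rfl

def eH2 : ((ZMod 0 × ZMod 4) × (ZMod 0 × ZMod 1) × (ZMod 2 × ZMod 1) × (ZMod 1 × ZMod 1)) ≃+
    ((Fin 2 → ℤ) × ZMod 4 × ZMod 2) where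
  toFun x := (![x.1.1, x.2.1.1], x.1.2, x.2.2.1.1)
  invFun y := ((y.1 0, y.2.1), (y.1 1, 0), (y.2.2, 0), (0, 0))
  left_inv x := Prod.ext (Prod.ext rfl rfl) (Prod.ext (Prod.ext rfl (Subsingleton.elim _ _))
    (Prod.ext (Prod.ext rfl (Subsingleton.elim _ _)) (Subsingleton.elim _ _)))
  right_inv y := Prod.ext (by funext i; fin_cases i <;> rfl) rfl
  map_add' x y := Prod.ext (by funext i; fin_cases i <;> rfl) rfl

def eH3 : ((ZMod 0 × ZMod 2) × (ZMod 0 × ZMod 4) × (ZMod 4 × ZMod 1) × (ZMod 2 × ZMod 1)) ≃+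
    ((Fin 2 → ℤ) × (Fin 2 → ZMod 4) × (Fin 2 → ZMod 2)) where
  toFun x := (![x.1.1, x.2.1.1], ![x.2.1.2, x.2.2.1.1], ![x.1.2, x.2.2.2.1])
  invFun y := ((y.1 0, y.2.2 0), (y.1 1, y.2.1 0), (y.2.1 1, 0), (y.2.2 1, 0))
  left_inv x := Prod.ext (Prod.ext rfl rfl) (Prod.ext (Prod.ext rfl rfl)
    (Prod.ext (Prod.ext rfl (Subsingleton.elim _ _)) (Prod.ext rfl (Subsingleton.elim _ _))))
  right_inv y := Prod.ext (by funext i; fin_cases i <;> rfl)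
    (Prod.ext (by funext i; fin_cases i <;> rfl) (by funext i; fin_cases i <;> rfl))
  map_add' x y := Prod.ext (by funext i; fin_cases i <;> rfl)
    (Prod.ext (by funext i; fin_cases i <;> rfl) (by funext i; fin_cases i <;> rfl))

def eH4 : ((ZMod 4 × ZMod 2) × (ZMod 0 × ZMod 2) × (ZMod 2 × ZMod 2) × (ZMod 4 × ZMod 1)) ≃+
    (ℤ × (Fin 2 → ZMod 4) × (Fin 4 → ZMod 2)) where
  toFun x := (x.2.1.1, ![x.1.1, x.2.2.2.1], ![x.1.2, x.2.1.2, x.2.2.1.1, x.2.2.1.2])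
  invFun y := ((y.2.1 0, y.2.2 0), (y.1, y.2.2 1), (y.2.2 2, y.2.2 3), (y.2.1 1, 0))
  left_inv x := Prod.ext (Prod.ext rfl rfl) (Prod.ext (Prod.ext rfl rfl)
    (Prod.ext (Prod.ext rfl rfl) (Prod.ext rfl (Subsingleton.elim _ _))))
  right_inv y := Prod.ext rfl
    (Prod.ext (by funext i; fin_cases i <;> rfl) (by funext i; fin_cases i <;> rfl))
  map_add' x y := Prod.ext rfl
    (Prod.ext (by funext i; fin_cases i <;> rfl) (by funext i; fin_cases i <;> rfl))

def eH5 : ((ZMod 4 × ZMod 2) × (ZMod 4 × ZMod 2) × (ZMod 2 × ZMod 2) × (ZMod 2 × ZMod 2)) ≃+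
    ((Fin 2 → ZMod 4) × (Fin 6 → ZMod 2)) where
  toFun x := (![x.1.1, x.2.1.1], ![x.1.2, x.2.1.2, x.2.2.1.1, x.2.2.1.2, x.2.2.2.1, x.2.2.2.2])
  invFun y := ((y.1 0, y.2 0), (y.1 1, y.2 1), (y.2 2, y.2 3), (y.2 4, y.2 5))
  left_inv x := rfl
  right_inv y := 
    (Prod.ext (by funext i; fin_cases i <;> rfl) (by funext i; fin_cases i <;> rfl))
  map_add' x y :=
    (Prod.ext (by funext i; fin_cases i <;> rfl) (by funext i; fin_cases i <;> rfl))

lemma Good.of {s t rK rJ ta rKa rJa} {T : Type} [AddCommGroup T] (h : Good s ta rKa rJa T)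
    (h1 : t % 2 = ta) (h2 : min rK 4 = rKa) (h3 : min rJ 4 = rJa) : Good s t rK rJ T := by
  subst h1 h2 h3
  exact h.congr

/-- stable range, positive sign -/
lemma goodP (t rK rJ : ℕ) (h2 : 4 ≤ rK) (h3 : 4 ≤ rJ) : Good false t rK rJ (ZMod 4 × ZMod 2) := by
  rcases Nat.mod_two_eq_zero_or_one t with h | h
  · exact goodP4.of h (by omega) (by omega)
  · exact goodP5.of h (by omega) (by omega)

/-- stable range, negative sign -/
lemma goodN (t rK rJ : ℕ) (h2 : 4 ≤ rK) (h3 : 4 ≤ rJ) : Good true t rK rJ (ZMod 2 × ZMod 2) := by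
  rcases Nat.mod_two_eq_zero_or_one t with h | h
  · exact goodN4.of h (by omega) (by omega)
  · exact goodN5.of h (by omega) (by omega)

theorem coh1 : Nonempty (H 1 ≃+ (Fin 2 → ℤ)) :=
  (coh_of_good 0 (goodP1.of rfl rfl rfl) (goodP0.of rfl rfl rfl) (goodN0.of rfl rfl rfl)
    (goodNz.of rfl rfl rfl)).map fun e => e.trans eH1

theorem coh2 : Nonempty (H 2 ≃+ ((Fin 2 → ℤ) × ZMod 4 × ZMod 2)) :=
  (coh_of_good 1 (goodP2.of rfl rfl rfl) (goodP1.of rfl rfl rfl) (goodN1.of rfl rfl rfl)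
    (goodN0.of rfl rfl rfl)).map fun e => e.trans eH2

theorem coh3 : Nonempty (H 3 ≃+ ((Fin 2 → ℤ) × (Fin 2 → ZMod 4) × (Fin 2 → ZMod 2))) :=
  (coh_of_good 2 (goodP3.of rfl rfl rfl) (goodP2.of rfl rfl rfl) (goodN2.of rfl rfl rfl)
    (goodN1.of rfl rfl rfl)).map fun e => e.trans eH3

theorem coh4 : Nonempty (H 4 ≃+ (ℤ × (Fin 2 → ZMod 4) × (Fin 4 → ZMod 2))) :=
  (coh_of_good 3 (goodP4.of rfl rfl rfl) (goodP3.of rfl rfl rfl) (goodN3.of rfl rfl rfl)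
    (goodN2.of rfl rfl rfl)).map fun e => e.trans eH4

theorem coh5 (n : ℕ) (hn : 4 ≤ n) : Nonempty (H (n + 1) ≃+ ((Fin 2 → ZMod 4) × (Fin 6 → ZMod 2))) := by
  have G3 : Good true (n + 3) n (n - 1) (ZMod 2 × ZMod 2) := by
    by_cases h : n = 4
    · subst h
      exact goodN3.of rfl rfl rfl
    · exact goodN _ _ _ hn (by omega)
  exact (coh_of_good n (goodP _ _ _ (by omega) (by omega)) (goodP _ _ _ (by omega) (by omega))
    (goodN _ _ _ (by omega) (by omega)) G3).map fun e => e.trans eH5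

end CubeRes

theorem cohomology_min82_1_3 :
    Nonempty (H 1 ≃+ (Fin 2 → ℤ)) ∧
    Nonempty (H 2 ≃+ ((Fin 2 → ℤ) × ZMod 4 × ZMod 2)) ∧
    Nonempty (H 3 ≃+ ((Fin 2 → ℤ) × (Fin 2 → ZMod 4) × (Fin 2 → ZMod 2))) ∧
    Nonempty (H 4 ≃+ (ℤ × (Fin 2 → ZMod 4) × (Fin 4 → ZMod 2))) ∧
    (∀ i, 5 ≤ i → Nonempty (H i ≃+ ((Fin 2 → ZMod 4) × (Fin 6 → ZMod 2)))) := by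
  refine ⟨CubeRes.coh1, CubeRes.coh2, CubeRes.coh3, CubeRes.coh4, fun i hi => ?_⟩
  obtain ⟨n, rfl⟩ : ∃ n, i = n + 1 := ⟨i - 1, by omega⟩
  exact CubeRes.coh5 n (by omega)
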